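/- For every real number d that is irrational and algebraic over ℚ, every compact set K contained in the open strip D := {s ∈ ℂ : 1/2 < Re(s) < 1} with connected complement in ℂ, and every ε > 0, one has liminf_{T→∞} (1/T)·μ{τ ∈ [0,T] : sup_{s∈K} |ζ(s+idτ) − ζ(s+iτ)| < ε} > 0. -/

import Mathlib

open MeasureTheory Filter Complex
open scoped ENNReal

/-- The open strip `D = {s : 1/2 < Re s < 1}`. -/
def strip : Set ℂ := {s : ℂ | 1/2 < s.re ∧ s.re < 1}

/-- Lower density of a set of real numbers:
`liminf_{T→∞} (1/T)·μ(S ∩ [0,T])`. -/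
noncomputable def lowerDens (S : Set ℝ) : ℝ :=
  liminf (fun T : ℝ => (volume (S ∩ Set.Icc 0 T)).toReal / T) atTop

/-- `sup_{s ∈ K} |f s|`, valued in `ℝ≥0∞`. -/
noncomputable def supNorm (K : Set ℂ) (f : ℂ → ℂ) : ℝ≥0∞ :=
  ⨆ s ∈ K, (‖f s‖₊ : ℝ≥0∞)


open FourierTransform Real Convolution in
lemma planch {φ : ℝ → ℂ} (h1 : Integrable φ) (h2 : Integrable (fun v => ‖φ v‖ ^ 2)) {R : ℝ}
    (hR : 0 < R) :
    ∫ ξ in (-R)..R, ‖𝓕 φ ξ‖ ^ 2 ≤ Real.exp π * ∫ v, ‖φ v‖ ^ 2 := by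
  set ψ : ℝ → ℂ := fun v => (starRingEnd ℂ) (φ (-v)) with hψ
  have hψ1 : Integrable ψ := by
    have : Integrable (fun v => φ (-v)) := h1.comp_neg
    exact (LinearIsometryEquiv.integrable_comp_iff (conjLIE : ℂ ≃ₗᵢ[ℝ] ℂ)).2 this
  have hFψ : ∀ ξ, 𝓕 ψ ξ = (starRingEnd ℂ) (𝓕 φ ξ) := by
    intro ξ
    rw [Real.fourier_eq', Real.fourier_eq', ← integral_conj, ← integral_neg_eq_self]
    congr 1
    ext v
    simp [hψ, ← Complex.exp_conj, Complex.conj_ofNat]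
  set h : ℝ → ℂ := φ ⋆[ContinuousLinearMap.mul ℂ ℂ] ψ with hh
  have hhi : Integrable h := h1.integrable_convolution _ hψ1
  have hFh : ∀ ξ, 𝓕 h ξ = ((‖𝓕 φ ξ‖ ^ 2 : ℝ) : ℂ) := by
    intro ξ
    rw [hh, Real.fourier_mul_convolution_eq h1 hψ1, hFψ, Complex.mul_conj, Complex.normSq_eq_norm_sq]
  set A := ∫ v, ‖φ v‖ ^ 2 with hA
  have hhb : ∀ x, ‖h x‖ ≤ A := by
    intro x
    have i2 : Integrable (fun v => ‖φ (v - x)‖ ^ 2) := h2.comp_sub_right x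
    calc ‖h x‖ ≤ ∫ v, ‖φ v * ψ (x - v)‖ := by
          simp only [hh, convolution_def]
          exact norm_integral_le_integral_norm _
      _ ≤ ∫ v, (‖φ v‖ ^ 2 / 2 + ‖φ (v - x)‖ ^ 2 / 2) := by
          apply integral_mono_of_nonneg (Eventually.of_forall fun v => norm_nonneg _)
            ((h2.div_const 2).add (i2.div_const 2))
          refine Eventually.of_forall fun v => ?_
          simp only [hψ, norm_mul, RCLike.norm_conj, neg_sub, Pi.add_apply]
          nlinarith [sq_nonneg (‖φ v‖ - ‖φ (v - x)‖)]
      _ = A := by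
          rw [integral_add (h2.div_const 2) (i2.div_const 2), integral_div, integral_div,
            integral_sub_right_eq_self (fun v => ‖φ v‖ ^ 2) x]
          ring
  set b : ℝ := (R ^ 2)⁻¹ with hb
  have hb0 : 0 < b := by positivity
  set g : ℝ → ℂ := fun x => cexp (-π * b * x ^ 2) with hg
  have hgr : ∀ x, g x = ((Real.exp (-(π * b) * x ^ 2) : ℝ) : ℂ) := by
    intro x; simp [hg]
  have hgi' : Integrable (fun x : ℝ => Real.exp (-(π * b) * x ^ 2)) :=
    integrable_exp_neg_mul_sq (by positivity)
  have hgi : Integrable g := by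
    have := hgi'.ofReal (𝕜 := ℂ)
    exact this.congr (Eventually.of_forall fun x => (hgr x).symm)
  have hFg : ∀ t : ℝ, ‖𝓕 g t‖ = R * Real.exp (-(π / b) * t ^ 2) := by
    intro t
    have := congrFun (fourier_gaussian_pi (b := (b : ℂ)) (by simpa using hb0)) t
    rw [hg, this, norm_mul]
    congr 1
    · rw [norm_div, norm_one, Complex.norm_cpow_eq_rpow_re_of_pos hb0]
      simp only [hb]
      rw [show ((1 / 2 : ℂ)).re = 1 / 2 by norm_num, ← Real.sqrt_eq_rpow, Real.sqrt_inv, Real.sqrt_sq hR.le]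
      simp
    · rw [Complex.norm_exp]
      congr 1
      rw [show (-(π : ℂ) / b * t ^ 2) = ((-(π / b) * t ^ 2 : ℝ) : ℂ) by push_cast; ring,
        Complex.ofReal_re]
  have hFgi : Integrable (fun t : ℝ => R * Real.exp (-(π / b) * t ^ 2)) :=
    (integrable_exp_neg_mul_sq (by positivity)).const_mul R
  have hFgI : ∫ t : ℝ, R * Real.exp (-(π / b) * t ^ 2) = 1 := by
    rw [integral_const_mul, integral_gaussian, hb]
    rw [show π / (π / (R ^ 2)⁻¹) = (R⁻¹) ^ 2 by field_simp, Real.sqrt_sq (by positivity)]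
    field_simp
  have key : ∫ ξ, 𝓕 h ξ • g ξ = ∫ x, h x • 𝓕 g x :=
    VectorFourier.integral_fourierIntegral_smul_eq_flip (L := innerₗ ℝ) Real.continuous_fourierChar
      continuous_inner hhi hgi |>.trans (by
        congr 1; ext x; congr 1; simp [Real.fourier_eq, VectorFourier.fourierIntegral])
  have hcont : Continuous (𝓕 φ) :=
    VectorFourier.fourierIntegral_continuous Real.continuous_fourierChar
      (by exact continuous_inner) h1
  have hGi : Integrable (fun ξ => ‖𝓕 φ ξ‖ ^ 2 * Real.exp (-(π * b) * ξ ^ 2)) := by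
    apply Integrable.mono' (hgi'.const_mul ((∫ v, ‖φ v‖) ^ 2))
    · exact Continuous.aestronglyMeasurable (by fun_prop)
    · refine Eventually.of_forall fun ξ => ?_
      rw [norm_mul, norm_pow, norm_norm, Real.norm_of_nonneg (Real.exp_pos _).le]
      gcongr
      exact VectorFourier.norm_fourierIntegral_le_integral_norm _ _ _ _ _
  have k2 : ∫ ξ, ‖𝓕 φ ξ‖ ^ 2 * Real.exp (-(π * b) * ξ ^ 2) ≤ A := by
    have e1 : ((∫ ξ, ‖𝓕 φ ξ‖ ^ 2 * Real.exp (-(π * b) * ξ ^ 2) : ℝ) : ℂ) = ∫ x, h x • 𝓕 g x := by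
      rw [← key, ← integral_complex_ofReal]
      congr 1; ext ξ
      rw [hFh, hgr]; simp
    have e2 := congrArg norm e1
    rw [Complex.norm_real, Real.norm_eq_abs] at e2
    refine (le_abs_self _).trans (e2.le.trans ?_)
    calc ‖∫ x, h x • 𝓕 g x‖ ≤ ∫ x, ‖h x • 𝓕 g x‖ := norm_integral_le_integral_norm _
      _ ≤ ∫ x, A * (R * Real.exp (-(π / b) * x ^ 2)) := by
          apply integral_mono_of_nonneg (Eventually.of_forall fun v => norm_nonneg _)
            (hFgi.const_mul A)
          refine Eventually.of_forall fun x => ?_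
          simp only [norm_smul]
          rw [hFg]
          gcongr
          exact hhb x
      _ = A := by rw [integral_const_mul, hFgI, mul_one]
  have k3 : ∫ ξ in (-R)..R, ‖𝓕 φ ξ‖ ^ 2 ≤
      ∫ ξ in (-R)..R, Real.exp π * (‖𝓕 φ ξ‖ ^ 2 * Real.exp (-(π * b) * ξ ^ 2)) := by
    apply intervalIntegral.integral_mono_on (by linarith)
    · exact (Continuous.intervalIntegrable (by fun_prop) _ _)
    · exact (Continuous.intervalIntegrable (by fun_prop) _ _)
    intro ξ hξ
    have : 1 ≤ Real.exp π * Real.exp (-(π * b) * ξ ^ 2) := by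
      rw [← Real.exp_add]
      apply Real.one_le_exp
      have : b * ξ ^ 2 ≤ 1 := by
        rw [hb, inv_mul_le_one₀ (by positivity)]
        exact sq_le_sq' hξ.1 hξ.2
      nlinarith [Real.pi_pos]
    nlinarith [sq_nonneg ‖𝓕 φ ξ‖]
  refine k3.trans ?_
  rw [intervalIntegral.integral_const_mul]
  gcongr
  refine le_trans ?_ k2
  rw [intervalIntegral.integral_of_le (by linarith)]
  exact setIntegral_le_integral hGi (Eventually.of_forall fun ξ => by positivity)


noncomputable def frN (N : ℕ) : ℝ → ℂ := Set.indicator (Set.Ioi (N : ℝ)) (fun t => ((Int.fract t : ℝ) : ℂ))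

lemma frN_norm_le (N : ℕ) (t : ℝ) : ‖frN N t‖ ≤ 1 := by
  unfold frN
  by_cases h : t ∈ Set.Ioi (N : ℝ)
  · rw [Set.indicator_of_mem h, Complex.norm_real, Real.norm_of_nonneg (Int.fract_nonneg t)]
    exact (Int.fract_lt_one t).le
  · rw [Set.indicator_of_notMem h]; simp

lemma frN_meas (N : ℕ) : Measurable (frN N) := by
  unfold frN
  exact (Complex.measurable_ofReal.comp measurable_fract).indicator measurableSet_Ioi

lemma frN_locInt (N : ℕ) (s : Set ℝ) : LocallyIntegrableOn (frN N) s := by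
  apply LocallyIntegrable.locallyIntegrableOn
  apply LocallyIntegrable.mono (f := fun _ : ℝ => (1 : ℝ)) (locallyIntegrable_const 1)
    (frN_meas N).aestronglyMeasurable
  exact Eventually.of_forall fun t => by simpa using frN_norm_le N t

lemma frN_mellin (N : ℕ) (hN : 1 ≤ N) (s : ℂ) (hs : 0 < s.re) :
    MellinConvergent (frN N) (-s) ∧ DifferentiableAt ℂ (mellin (frN N)) (-s) := by
  have h1 : frN N =O[atTop] (fun x : ℝ => x ^ (-(0 : ℝ))) := by
    simp only [neg_zero, Real.rpow_zero]
    exact Asymptotics.isBigO_of_le _ fun t => by simpa using frN_norm_le N t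
  have h2 : frN N =O[nhdsWithin 0 (Set.Ioi 0)] (fun x : ℝ => x ^ (-(-s.re - 1))) := by
    apply Asymptotics.IsBigO.congr' (Asymptotics.isBigO_zero _ _) _ EventuallyEq.rfl
    have : Set.Iio (1 : ℝ) ∈ nhdsWithin 0 (Set.Ioi 0) :=
      mem_nhdsWithin_of_mem_nhds (Iio_mem_nhds one_pos)
    filter_upwards [this] with t ht
    unfold frN
    rw [Set.indicator_of_notMem]
    have : (1 : ℝ) ≤ N := by exact_mod_cast hN
    simp only [Set.mem_Ioi, not_lt]
    exact ht.le.trans this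
  constructor
  · exact mellinConvergent_of_isBigO_rpow (frN_locInt N _) h1 (by simpa using hs) h2 (by simp)
  · exact mellin_differentiableAt_of_isBigO_rpow (frN_locInt N _) h1 (by simpa using hs) h2 (by simp)

lemma zeta_formula_one_lt (N : ℕ) (hN : 1 ≤ N) (s : ℂ) (hs : 1 < s.re) :
    riemannZeta s = ∑ n ∈ Finset.Icc 1 N, (n : ℂ) ^ (-s) + (N : ℂ) ^ (1 - s) / (s - 1)
      - s * mellin (frN N) (-s) := by
  have hN0 : (0 : ℝ) < N := by exact_mod_cast hN
  have hs0 : s ≠ 0 := by rintro rfl; simp at hs; linarith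
  have hs1 : s - 1 ≠ 0 := by
    intro h; have : s = 1 := by linear_combination h
    rw [this] at hs; simp at hs
  set f : ℕ → ℂ := fun k => if N < k then 1 else 0 with hf
  have hsum : ∀ n : ℕ, ∑ k ∈ Finset.Icc 1 n, f k = ((n - N : ℕ) : ℂ) := by
    intro n
    simp only [hf]
    rw [Finset.sum_boole]
    congr 1
    rw [show (Finset.Icc 1 n).filter (fun k => N < k) = Finset.Ioc N n by ext; simp; omega]
    simp
  have hO : (fun n ↦ ∑ k ∈ Finset.Icc 1 n, ‖f k‖) =O[atTop] fun n ↦ (n : ℝ) ^ (1 : ℝ) := by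
    apply Asymptotics.isBigO_of_le
    intro n
    simp only [Real.rpow_one]
    rw [Real.norm_of_nonneg (by positivity), Real.norm_of_nonneg (by positivity)]
    calc _ ≤ ∑ k ∈ Finset.Icc 1 n, (1 : ℝ) := by
            apply Finset.sum_le_sum; intro k _; simp only [hf]; split_ifs <;> simp
      _ = n := by simp
  have hL := LSeries_eq_mul_integral' f zero_le_one hs hO
  have hLs : LSeriesSummable f s := LSeriesSummable_of_sum_norm_bigO hO zero_le_one hs
  have e1 : riemannZeta s = ∑ n ∈ Finset.Icc 1 N, (n : ℂ) ^ (-s) + LSeries f s := by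
    rw [zeta_eq_tsum_one_div_nat_cpow hs, LSeries]
    have hfin : HasSum (fun n : ℕ => if n ∈ Finset.Icc 1 N then (n : ℂ) ^ (-s) else 0)
        (∑ n ∈ Finset.Icc 1 N, (n : ℂ) ^ (-s)) := by
      have := hasSum_sum_of_ne_finset_zero (L := SummationFilter.unconditional ℕ)
        (f := fun n : ℕ => if n ∈ Finset.Icc 1 N then (n : ℂ) ^ (-s) else 0)
        (s := Finset.Icc 1 N) (by intro b hb; simp only [if_neg hb])
      rw [Finset.sum_congr rfl (fun n hn => if_pos hn)] at this
      exact this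
    rw [← (hfin.add hLs.hasSum).tsum_eq]
    congr 1; ext n
    simp only [LSeries.term, hf, Finset.mem_Icc]
    rcases Nat.eq_zero_or_pos n with h0 | h0
    · subst h0; simp [hs0]
    · by_cases hn : n ≤ N
      · rw [if_pos ⟨h0, hn⟩, if_neg h0.ne', if_neg (not_lt.2 hn), cpow_neg]; simp
      · rw [if_neg (by omega), if_neg h0.ne', if_pos (not_le.1 hn)]; simp
  have i1 : IntegrableOn (fun t : ℝ => (t : ℂ) ^ (-s)) (Set.Ioi (N : ℝ)) :=
    integrableOn_Ioi_cpow_of_lt (by simpa using hs) hN0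
  have i2 : IntegrableOn (fun t : ℝ => (t : ℂ) ^ (-(s + 1))) (Set.Ioi (N : ℝ)) :=
    integrableOn_Ioi_cpow_of_lt (by simp; linarith) hN0
  have hmc := (frN_mellin N hN s (by linarith)).1
  have i3 : IntegrableOn (fun t : ℝ => (t : ℂ) ^ (-s - 1) * frN N t) (Set.Ioi (N : ℝ)) :=
    IntegrableOn.mono_set hmc (Set.Ioi_subset_Ioi hN0.le)
  have e2 : mellin (frN N) (-s) = ∫ t in Set.Ioi (N : ℝ), (t : ℂ) ^ (-s - 1) * frN N t := by
    rw [mellin]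
    apply setIntegral_eq_of_subset_of_forall_sdiff_eq_zero measurableSet_Ioi
      (Set.Ioi_subset_Ioi hN0.le)
    intro t ht
    simp [frN, Set.indicator_of_notMem ht.2]
  have e3 : ∫ t in Set.Ioi (1 : ℝ), (∑ k ∈ Finset.Icc 1 ⌊t⌋₊, f k) * (t : ℂ) ^ (-(s + 1)) =
      ∫ t in Set.Ioi (N : ℝ), ((t : ℂ) ^ (-s) - N * (t : ℂ) ^ (-(s + 1)) - (t : ℂ) ^ (-s - 1) * frN N t) := by
    rw [setIntegral_eq_of_subset_of_forall_sdiff_eq_zero (s := Set.Ioi (N : ℝ)) measurableSet_Ioi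
      (Set.Ioi_subset_Ioi (by exact_mod_cast hN))]
    · apply setIntegral_congr_fun measurableSet_Ioi
      intro t ht
      have ht0 : (0 : ℝ) < t := hN0.trans ht
      have hfl : N ≤ ⌊t⌋₊ := Nat.le_floor (le_of_lt ht)
      simp only
      rw [hsum, Nat.cast_sub hfl, frN, Set.indicator_of_mem ht]
      have : ((⌊t⌋₊ : ℕ) : ℂ) = (t : ℂ) - (Int.fract t : ℝ) := by
        rw [← Complex.ofReal_natCast, ← Complex.ofReal_sub, natCast_floor_eq_intCast_floor ht0.le]
        congr 1
        have := Int.floor_add_fract t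
        linarith
      rw [this]
      have h4 : (t : ℂ) ^ (-s) = t * (t : ℂ) ^ (-(s + 1)) := by
        rw [show -s = 1 + -(s + 1) by ring, cpow_add _ _ (by exact_mod_cast ht0.ne'), cpow_one]
      rw [h4, show -s - 1 = -(s + 1) by ring]
      ring
    · intro t ht
      rw [hsum]
      have : ⌊t⌋₊ ≤ N := Nat.floor_le_of_le (not_lt.1 ht.2)
      simp [Nat.sub_eq_zero_of_le this]
  have hNc : (N : ℂ) ≠ 0 := by exact_mod_cast hN0.ne'
  have i4 : IntegrableOn (fun t : ℝ => (N : ℂ) * (t : ℂ) ^ (-(s + 1))) (Set.Ioi (N : ℝ)) :=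
    i2.const_mul _
  have i5 : IntegrableOn (fun t : ℝ => (t : ℂ) ^ (-s) - (N : ℂ) * (t : ℂ) ^ (-(s + 1)))
    (Set.Ioi (N : ℝ)) := i1.sub i4
  rw [e1, hL, e3, integral_sub i5 i3, integral_sub i1 i4,
    integral_const_mul, integral_Ioi_cpow_of_lt (by simpa using hs) hN0,
    integral_Ioi_cpow_of_lt (by simp; linarith) hN0, ← e2]
  simp only [ofReal_natCast]
  have h5 : (N : ℂ) ^ (-(s + 1) + 1) = (N : ℂ) ^ (1 - s) / N := by
    rw [show -(s + 1) + 1 = (1 - s) - 1 by ring, cpow_sub _ _ hNc, cpow_one]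
  rw [h5, show -s + 1 = 1 - s by ring, show -(s + 1) + 1 = -s by ring]
  have : 1 - s ≠ 0 := by intro h; apply hs1; linear_combination -h
  field_simp
  ring

lemma zeta_formula (N : ℕ) (hN : 1 ≤ N) (s : ℂ) (hs : 0 < s.re) (hs1 : s ≠ 1) :
    riemannZeta s = ∑ n ∈ Finset.Icc 1 N, (n : ℂ) ^ (-s) + (N : ℂ) ^ (1 - s) / (s - 1)
      - s * mellin (frN N) (-s) := by
  have hN0 : (0 : ℝ) < N := by exact_mod_cast hN
  have hNc : (N : ℂ) ≠ 0 := by exact_mod_cast hN0.ne'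
  set U : Set ℂ := {s | 0 < s.re} with hU
  have hUo : IsOpen U := isOpen_lt continuous_const Complex.continuous_re
  set G : ℂ → ℂ := fun s => (s - 1) * ∑ n ∈ Finset.Icc 1 N, (n : ℂ) ^ (-s) + (N : ℂ) ^ (1 - s)
      - (s - 1) * (s * mellin (frN N) (-s)) with hG
  have hGd : DifferentiableOn ℂ G U := by
    intro z hz
    have hm : DifferentiableAt ℂ (fun s => mellin (frN N) (-s)) z :=
      DifferentiableAt.comp (g := mellin (frN N)) (f := fun s : ℂ => -s) z (frN_mellin N hN z hz).2
        differentiableAt_id.neg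
    have h2 : DifferentiableAt ℂ (fun s : ℂ => (N : ℂ) ^ (1 - s)) z :=
      DifferentiableAt.const_cpow (by fun_prop) (Or.inl hNc)
    have h3 : DifferentiableAt ℂ (fun s : ℂ => ∑ n ∈ Finset.Icc 1 N, (n : ℂ) ^ (-s)) z := by
      apply DifferentiableAt.fun_sum
      intro n hn
      have : n ≠ 0 := by have := (Finset.mem_Icc.1 hn).1; omega
      exact DifferentiableAt.const_cpow (by fun_prop) (Or.inl (by exact_mod_cast this))
    apply DifferentiableAt.differentiableWithinAt
    fun_prop
  have hEq : Set.EqOn riemannZeta₁ G U := by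
    apply AnalyticOnNhd.eqOn_of_preconnected_of_eventuallyEq (z₀ := 2)
      (differentiable_riemannZeta₁.differentiableOn.analyticOnNhd hUo) (hGd.analyticOnNhd hUo)
    · exact (convex_halfSpace_re_gt 0).isPreconnected
    · simp [hU]
    · have : {s : ℂ | 1 < s.re} ∈ nhds (2 : ℂ) :=
        (isOpen_lt continuous_const Complex.continuous_re).mem_nhds (by simp)
      filter_upwards [this] with z hz
      have hz1 : z ≠ 1 := by rintro rfl; simp at hz
      have hz2 : z - 1 ≠ 0 := sub_ne_zero.2 hz1
      have := riemannZeta_eq_inv_sub_mul hz1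
      have h2 : riemannZeta₁ z = (z - 1) * riemannZeta z := by rw [this]; field_simp
      rw [h2, zeta_formula_one_lt N hN z hz, hG]
      field_simp
  have hz2 : s - 1 ≠ 0 := sub_ne_zero.2 hs1
  rw [riemannZeta_eq_inv_sub_mul hs1, hEq hs, hG]
  field_simp

lemma sum_exp_abs_le (N : ℕ) (m : ℕ) :
    ∑ n ∈ Finset.Icc 1 N, Real.exp (-(((n : ℝ) - m) ^ 2) / 4) ≤
      2 * ∑' k : ℕ, Real.exp (-(1 / 4)) ^ k := by
  set r := Real.exp (-(1 / 4)) with hr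
  have hr0 : 0 < r := Real.exp_pos _
  have hr1 : r < 1 := by rw [hr]; exact (by rw [← Real.exp_zero]; exact Real.exp_lt_exp.2 (by norm_num))
  have hs : Summable (fun k : ℕ => r ^ k) := summable_geometric_of_lt_one hr0.le hr1
  have key : ∀ k : ℕ, Real.exp (-((k : ℝ) ^ 2) / 4) ≤ r ^ k := by
    intro k
    rw [hr, ← Real.exp_nat_mul]
    apply Real.exp_le_exp.2
    have : (k : ℝ) ≤ (k : ℝ) ^ 2 := by exact_mod_cast Nat.le_self_pow (by norm_num) k
    linarith
  rw [two_mul, ← Finset.sum_filter_add_sum_filter_not _ (fun n => m ≤ n)]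
  gcongr
  · calc _ ≤ ∑ n ∈ (Finset.Icc 1 N).filter (fun n => m ≤ n), r ^ (n - m) := by
          apply Finset.sum_le_sum
          intro n hn
          have h := (Finset.mem_filter.1 hn).2
          rw [← Nat.cast_sub h]; exact key _
      _ = ∑ k ∈ ((Finset.Icc 1 N).filter (fun n => m ≤ n)).image (fun n => n - m), r ^ k := by
          rw [Finset.sum_image]
          intro x hx y hy h
          simp at hx hy h; omega
      _ ≤ _ := hs.sum_le_tsum _ (fun _ _ => by positivity)
  · calc _ ≤ ∑ n ∈ (Finset.Icc 1 N).filter (fun n => ¬ m ≤ n), r ^ (m - n) := by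
          apply Finset.sum_le_sum
          intro n hn
          have h := (Finset.mem_filter.1 hn).2
          rw [← neg_sub (m : ℝ), neg_sq, ← Nat.cast_sub (by omega)]; exact key _
      _ = ∑ k ∈ ((Finset.Icc 1 N).filter (fun n => ¬ m ≤ n)).image (fun n => m - n), r ^ k := by
          rw [Finset.sum_image]
          intro x hx y hy h
          simp at hx hy h; omega
      _ ≤ _ := hs.sum_le_tsum _ (fun _ _ => by positivity)

lemma log_diff_ge (N m n : ℕ) (hm : 1 ≤ m) (hn : 1 ≤ n) (hmN : m ≤ N) (hnN : n ≤ N) :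
    ((n : ℝ) - m) ^ 2 ≤ (N : ℝ) ^ 2 * (Real.log n - Real.log m) ^ 2 := by
  wlog h : m ≤ n generalizing m n
  · have := this n m hn hm hnN hmN (by omega)
    nlinarith
  have hm0 : (0 : ℝ) < m := by exact_mod_cast hm
  have hn0 : (0 : ℝ) < n := by exact_mod_cast hn
  have h1 : Real.log m - Real.log n ≤ m / n - 1 := by
    rw [← Real.log_div hm0.ne' hn0.ne']
    exact Real.log_le_sub_one_of_pos (by positivity)
  have h2 : (n : ℝ) - m ≤ N * (Real.log n - Real.log m) := by
    have h3 : ((n : ℝ) - m) / n ≤ Real.log n - Real.log m := by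
      rw [sub_div, div_self hn0.ne']; linarith
    have hnm : (0 : ℝ) ≤ n - m := by rw [sub_nonneg]; exact_mod_cast h
    calc (n : ℝ) - m = n * ((n - m) / n) := by field_simp
      _ ≤ N * ((n - m) / n) := by gcongr
      _ ≤ _ := by gcongr
  rw [← mul_pow]
  have hnm : (0 : ℝ) ≤ n - m := by rw [sub_nonneg]; exact_mod_cast h
  gcongr

lemma dirichlet_meanSq : ∃ C : ℝ, 0 < C ∧ ∀ (N : ℕ) (c : ℕ → ℂ), 1 ≤ N →
    ∫ t in (-(N : ℝ))..N, ‖∑ n ∈ Finset.Icc 1 N, c n * cexp (-(I * t * Real.log n))‖ ^ 2 ≤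
      C * N * ∑ n ∈ Finset.Icc 1 N, ‖c n‖ ^ 2 := by
  set C0 : ℝ := 2 * ∑' k : ℕ, Real.exp (-(1 / 4)) ^ k with hC0
  have hC00 : 0 < C0 := by
    have hs : Summable (fun k : ℕ => Real.exp (-(1 / 4)) ^ k) :=
      summable_geometric_of_lt_one (Real.exp_pos _).le ((by rw [← Real.exp_zero]; exact Real.exp_lt_exp.2 (by norm_num)))
    have := hs.tsum_pos (fun k => by positivity) 0 (by simp)
    positivity
  refine ⟨Real.exp 1 * √Real.pi * C0, by positivity, fun N c hN => ?_⟩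
  have hN0 : (0 : ℝ) < N := by exact_mod_cast hN
  set b : ℝ := ((N : ℝ) ^ 2)⁻¹ with hb
  have hb0 : 0 < b := by positivity
  set S : ℝ → ℂ := fun t => ∑ n ∈ Finset.Icc 1 N, c n * cexp (-(I * t * Real.log n)) with hS
  have hScont : Continuous S := by fun_prop
  -- termwise function
  set F : ℕ → ℕ → ℝ → ℂ := fun m n t => c m * (starRingEnd ℂ) (c n) *
    (cexp (I * ((Real.log n - Real.log m : ℝ) : ℂ) * t) * cexp (-(b : ℂ) * t ^ 2)) with hF
  have hFint : ∀ m n, Integrable (F m n) := by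
    intro m n
    apply Integrable.const_mul
    have hg : Integrable (fun t : ℝ => cexp (-(b : ℂ) * t ^ 2)) :=
      integrable_cexp_neg_mul_sq (by simpa using hb0)
    apply hg.bdd_mul (c := 1)
    · exact Continuous.aestronglyMeasurable (by fun_prop)
    · refine Eventually.of_forall fun t => ?_
      rw [show I * ((Real.log n - Real.log m : ℝ) : ℂ) * t = (((Real.log n - Real.log m) * t : ℝ) : ℂ) * I by
        push_cast; ring, Complex.norm_exp_ofReal_mul_I]
  have hexp : ∀ t : ℝ, ((‖S t‖ ^ 2 * Real.exp (-b * t ^ 2) : ℝ) : ℂ) =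
      ∑ m ∈ Finset.Icc 1 N, ∑ n ∈ Finset.Icc 1 N, F m n t := by
    intro t
    rw [ofReal_mul, ← Complex.normSq_eq_norm_sq, ← Complex.mul_conj, hS]
    simp only []
    rw [map_sum, Finset.sum_mul_sum, Finset.sum_mul]
    apply Finset.sum_congr rfl; intro m _
    rw [Finset.sum_mul]
    apply Finset.sum_congr rfl; intro n _
    simp only [hF, map_mul, ← Complex.exp_conj, map_neg, conj_I, conj_ofReal]
    generalize Real.log m = u
    generalize Real.log n = v
    push_cast
    rw [show c m * cexp (-(I * t * u)) * ((starRingEnd ℂ) (c n) * cexp (-(-I * t * v))) * cexp (-b * t ^ 2)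
      = c m * (starRingEnd ℂ) (c n) * ((cexp (-(I * t * u)) * cexp (-(-I * t * v))) * cexp (-b * t ^ 2)) by ring,
      ← Complex.exp_add]
    congr 3
    ring_nf
  have hFI : ∀ m n, ‖∫ t, F m n t‖ = ‖c m‖ * ‖c n‖ * (√Real.pi * N * Real.exp (-(N ^ 2 * (Real.log n - Real.log m) ^ 2) / 4)) := by
    intro m n
    simp only [hF]
    rw [integral_const_mul, fourierIntegral_gaussian (by simpa using hb0), norm_mul, norm_mul, norm_mul, RCLike.norm_conj]
    congr 2
    · rw [← ofReal_div, Complex.norm_cpow_eq_rpow_re_of_pos (by positivity),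
        show ((1 / 2 : ℂ)).re = 1 / 2 by norm_num, ← Real.sqrt_eq_rpow, hb, div_inv_eq_mul,
        Real.sqrt_mul Real.pi_pos.le, Real.sqrt_sq hN0.le]
    · rw [show (-((Real.log n - Real.log m : ℝ) : ℂ) ^ 2 / (4 * (b : ℂ))) = ((-(N ^ 2 * (Real.log n - Real.log m) ^ 2) / 4 : ℝ) : ℂ) by
        rw [hb]; push_cast; field_simp, Complex.norm_exp, Complex.ofReal_re]
  have hGi : Integrable (fun t => ‖S t‖ ^ 2 * Real.exp (-b * t ^ 2)) := by
    have : Integrable (fun t => ((‖S t‖ ^ 2 * Real.exp (-b * t ^ 2) : ℝ) : ℂ)) := by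
      simp only [hexp]
      exact integrable_finsetSum _ fun m _ => integrable_finsetSum _ fun n _ => hFint m n
    exact this.re.congr (ae_of_all _ fun t => Complex.ofReal_re _)
  have k2 : ∫ t, ‖S t‖ ^ 2 * Real.exp (-b * t ^ 2) ≤ √Real.pi * N * C0 * ∑ n ∈ Finset.Icc 1 N, ‖c n‖ ^ 2 := by
    have e1 : ((∫ t, ‖S t‖ ^ 2 * Real.exp (-b * t ^ 2) : ℝ) : ℂ) =
        ∑ m ∈ Finset.Icc 1 N, ∑ n ∈ Finset.Icc 1 N, ∫ t, F m n t := by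
      rw [← integral_complex_ofReal]
      simp only [hexp]
      rw [integral_finsetSum _ fun m _ => integrable_finsetSum _ fun n _ => hFint m n]
      apply Finset.sum_congr rfl; intro m _
      rw [integral_finsetSum _ fun n _ => hFint m n]
    have e2 := congrArg norm e1
    rw [Complex.norm_real, Real.norm_eq_abs] at e2
    refine (le_abs_self _).trans (e2.le.trans ?_)
    set E : ℕ → ℕ → ℝ := fun m n => Real.exp (-(((n : ℝ) - m) ^ 2) / 4) with hE
    have hEsymm : ∀ m n, E m n = E n m := by
      intro m n; simp only [hE]; congr 2; ring
    calc ‖∑ m ∈ Finset.Icc 1 N, ∑ n ∈ Finset.Icc 1 N, ∫ t, F m n t‖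
        ≤ ∑ m ∈ Finset.Icc 1 N, ∑ n ∈ Finset.Icc 1 N, ‖∫ t, F m n t‖ :=
          (norm_sum_le _ _).trans (Finset.sum_le_sum fun m _ => norm_sum_le _ _)
      _ ≤ ∑ m ∈ Finset.Icc 1 N, ∑ n ∈ Finset.Icc 1 N,
            (√Real.pi * N / 2 * (‖c m‖ ^ 2 * E m n) + √Real.pi * N / 2 * (‖c n‖ ^ 2 * E m n)) := by
          apply Finset.sum_le_sum; intro m hm
          apply Finset.sum_le_sum; intro n hn
          rw [hFI]
          have h1 := Finset.mem_Icc.1 hm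
          have h2 := Finset.mem_Icc.1 hn
          have h3 : Real.exp (-(N ^ 2 * (Real.log n - Real.log m) ^ 2) / 4) ≤ E m n := by
            simp only [hE]
            apply Real.exp_le_exp.2
            have := log_diff_ge N m n h1.1 h2.1 h1.2 h2.2
            linarith
          calc _ ≤ ‖c m‖ * ‖c n‖ * (√Real.pi * N * E m n) := by gcongr
            _ = √Real.pi * N * E m n * (‖c m‖ * ‖c n‖) := by ring
            _ ≤ √Real.pi * N * E m n * ((‖c m‖ ^ 2 + ‖c n‖ ^ 2) / 2) := by
                have : 0 ≤ E m n := (Real.exp_pos _).le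
                gcongr
                nlinarith [sq_nonneg (‖c m‖ - ‖c n‖)]
            _ = _ := by ring
      _ = √Real.pi * N * ∑ m ∈ Finset.Icc 1 N, ‖c m‖ ^ 2 * ∑ n ∈ Finset.Icc 1 N, E m n := by
          simp only [Finset.sum_add_distrib]
          rw [Finset.sum_comm (f := fun m n => √Real.pi * N / 2 * (‖c n‖ ^ 2 * E m n))]
          have : ∀ y ∈ Finset.Icc 1 N, ∑ x ∈ Finset.Icc 1 N, √Real.pi * N / 2 * (‖c y‖ ^ 2 * E x y) =
             ∑ x ∈ Finset.Icc 1 N, √Real.pi * N / 2 * (‖c y‖ ^ 2 * E y x) := fun y _ =>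
              Finset.sum_congr rfl fun x _ => by rw [hEsymm]
          rw [Finset.sum_congr rfl this]
          simp only [← Finset.mul_sum]
          ring
      _ ≤ √Real.pi * N * ∑ m ∈ Finset.Icc 1 N, ‖c m‖ ^ 2 * C0 := by
          gcongr with m hm
          exact sum_exp_abs_le N m
      _ = _ := by rw [← Finset.sum_mul]; ring
  have k3 : ∫ t in (-(N : ℝ))..N, ‖S t‖ ^ 2 ≤
      ∫ t in (-(N : ℝ))..N, Real.exp 1 * (‖S t‖ ^ 2 * Real.exp (-b * t ^ 2)) := by
    apply intervalIntegral.integral_mono_on (by linarith)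
    · exact (Continuous.intervalIntegrable (by fun_prop) _ _)
    · exact (Continuous.intervalIntegrable (by fun_prop) _ _)
    intro t ht
    have : 1 ≤ Real.exp 1 * Real.exp (-b * t ^ 2) := by
      rw [← Real.exp_add]
      apply Real.one_le_exp
      have : b * t ^ 2 ≤ 1 := by
        rw [hb, inv_mul_le_one₀ (by positivity)]
        exact sq_le_sq' ht.1 ht.2
      linarith
    nlinarith [sq_nonneg ‖S t‖]
  refine k3.trans ?_
  rw [intervalIntegral.integral_const_mul]
  have k4 : ∫ t in (-(N : ℝ))..N, ‖S t‖ ^ 2 * Real.exp (-b * t ^ 2) ≤ ∫ t, ‖S t‖ ^ 2 * Real.exp (-b * t ^ 2) := by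
    rw [intervalIntegral.integral_of_le (by linarith)]
    exact setIntegral_le_integral hGi (Eventually.of_forall fun ξ => by positivity)
  calc _ ≤ Real.exp 1 * (√Real.pi * N * C0 * ∑ n ∈ Finset.Icc 1 N, ‖c n‖ ^ 2) := by
        gcongr; exact k4.trans k2
    _ = _ := by ring

open FourierTransform in
lemma mellin_meanSq (N : ℕ) (hN : 1 ≤ N) (σ : ℝ) (hσ : 1 / 2 ≤ σ) (hσ1 : σ ≤ 1) :
    ∫ t in (-(N : ℝ))..N, ‖((σ : ℂ) + t * I) * mellin (frN N) (-((σ : ℂ) + t * I))‖ ^ 2 ≤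
      4 * Real.pi * Real.exp Real.pi * (N : ℝ) ^ (2 - 2 * σ) := by
  have hN0 : (0 : ℝ) < N := by exact_mod_cast hN
  have hN1 : (1 : ℝ) ≤ N := by exact_mod_cast hN
  have hpi := Real.pi_pos
  set φ : ℝ → ℂ := fun u => Real.exp (σ * u) • frN N (Real.exp (-u)) with hφ
  have hφm : Measurable φ := by
    have := frN_meas N
    exact (Real.measurable_exp.comp (measurable_id.const_mul σ)).smul
      (this.comp (Real.measurable_exp.comp measurable_neg))
  have hφb : ∀ u, ‖φ u‖ ≤ (Set.Iic (-Real.log N)).indicator (fun u => Real.exp (σ * u)) u := by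
    intro u
    by_cases hu : u ∈ Set.Iic (-Real.log N)
    · rw [Set.indicator_of_mem hu]
      simp only [hφ, norm_smul, Real.norm_eq_abs, Real.abs_exp]
      exact mul_le_of_le_one_right (Real.exp_pos _).le (frN_norm_le _ _)
    · rw [Set.indicator_of_notMem hu]
      have : frN N (Real.exp (-u)) = 0 := by
        unfold frN
        rw [Set.indicator_of_notMem]
        simp only [Set.mem_Ioi, not_lt]
        rw [← Real.le_log_iff_exp_le hN0]
        simp only [Set.mem_Iic, not_le] at hu
        linarith
      simp [hφ, this]
  have hI1 : Integrable φ := by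
    refine Integrable.mono' ((integrable_indicator_iff measurableSet_Iic).2
      (integrableOn_exp_mul_Iic (by linarith : 0 < σ) (-Real.log N))) hφm.aestronglyMeasurable
      (ae_of_all _ hφb)
  have hφb2 : ∀ u, ‖φ u‖ ^ 2 ≤ (Set.Iic (-Real.log N)).indicator (fun u => Real.exp ((2 * σ) * u)) u := by
    intro u
    have := hφb u
    by_cases hu : u ∈ Set.Iic (-Real.log N)
    · rw [Set.indicator_of_mem hu] at this ⊢
      calc _ ≤ Real.exp (σ * u) ^ 2 := by gcongr
        _ = _ := by rw [← Real.exp_nat_mul]; congr 1; push_cast; ring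
    · rw [Set.indicator_of_notMem hu] at this ⊢
      have h0 : ‖φ u‖ = 0 := le_antisymm this (norm_nonneg _)
      rw [h0]; simp
  have hI2b : Integrable ((Set.Iic (-Real.log N)).indicator (fun u => Real.exp ((2 * σ) * u))) :=
    (integrable_indicator_iff measurableSet_Iic).2
      (integrableOn_exp_mul_Iic (by linarith : 0 < 2 * σ) (-Real.log N))
  have hI2 : Integrable (fun v => ‖φ v‖ ^ 2) := by
    refine Integrable.mono' hI2b (hφm.norm.pow_const 2).aestronglyMeasurable (ae_of_all _ fun u => ?_)
    rw [Real.norm_of_nonneg (by positivity)]; exact hφb2 u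
  have hIv : ∫ v, ‖φ v‖ ^ 2 ≤ (N : ℝ) ^ (-(2 * σ)) := by
    calc _ ≤ ∫ u, (Set.Iic (-Real.log N)).indicator (fun u => Real.exp ((2 * σ) * u)) u :=
          integral_mono hI2 hI2b hφb2
      _ = Real.exp (2 * σ * (-Real.log N)) / (2 * σ) := by
          rw [integral_indicator measurableSet_Iic, integral_exp_mul_Iic (by linarith)]
      _ = (N : ℝ) ^ (-(2 * σ)) / (2 * σ) := by
          rw [Real.rpow_def_of_pos hN0]; congr 2; ring
      _ ≤ _ := div_le_self (by positivity) (by linarith)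
  have hme : ∀ t : ℝ, mellin (frN N) (-((σ : ℂ) + t * I)) = 𝓕 φ (t / (-(2 * Real.pi))) := by
    intro t
    rw [mellin_eq_fourier]
    have e1 : (-((σ : ℂ) + t * I)).re = -σ := by simp
    have e2 : (-((σ : ℂ) + t * I)).im = -t := by simp
    rw [e1, e2, neg_neg, neg_div, div_neg]
  have hcont : Continuous (fun t : ℝ => mellin (frN N) (-((σ : ℂ) + t * I))) := by
    rw [continuous_iff_continuousAt]
    intro t
    have h := (frN_mellin N hN ((σ : ℂ) + t * I) (by simp; linarith)).2.continuousAt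
    exact ContinuousAt.comp (f := fun t : ℝ => -((σ : ℂ) + t * I)) h (by fun_prop)
  calc _ ≤ ∫ t in (-(N : ℝ))..N, 2 * (N : ℝ) ^ 2 * ‖mellin (frN N) (-((σ : ℂ) + t * I))‖ ^ 2 := by
        apply intervalIntegral.integral_mono_on (by linarith)
        · exact Continuous.intervalIntegrable (by fun_prop) _ _
        · exact Continuous.intervalIntegrable (by fun_prop) _ _
        intro t ht
        rw [norm_mul, mul_pow]
        gcongr
        rw [← Complex.normSq_eq_norm_sq, Complex.normSq_add_mul_I]
        have : t ^ 2 ≤ (N : ℝ) ^ 2 := sq_le_sq' ht.1 ht.2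
        nlinarith
    _ = 2 * (N : ℝ) ^ 2 * ∫ t in (-(N : ℝ))..N, (fun ξ => ‖𝓕 φ ξ‖ ^ 2) (t / (-(2 * Real.pi))) := by
        rw [intervalIntegral.integral_const_mul]; simp only [hme]
    _ = 2 * (N : ℝ) ^ 2 * (2 * Real.pi * ∫ ξ in (-(N / (2 * Real.pi)))..(N / (2 * Real.pi)), ‖𝓕 φ ξ‖ ^ 2) := by
        rw [intervalIntegral.integral_comp_div (c := -(2 * Real.pi)) (fun ξ => ‖𝓕 φ ξ‖ ^ 2) (neg_ne_zero.2 (by positivity))]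
        rw [intervalIntegral.integral_symm, neg_div_neg_eq, div_neg, smul_eq_mul]
        ring
    _ ≤ 2 * (N : ℝ) ^ 2 * (2 * Real.pi * (Real.exp Real.pi * (N : ℝ) ^ (-(2 * σ)))) := by
        gcongr
        exact (planch hI1 hI2 (by positivity)).trans (by gcongr)
    _ = _ := by
        rw [sub_eq_add_neg, Real.rpow_add hN0]
        norm_num; ring

lemma pole_meanSq (N : ℕ) (hN : 1 ≤ N) (σ : ℝ) (hσ : 0 ≤ σ) (hσ1 : σ < 1) :
    ∫ t in (-(N : ℝ))..N, ‖(N : ℂ) ^ (1 - ((σ : ℂ) + t * I)) / (((σ : ℂ) + t * I) - 1)‖ ^ 2 ≤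
      Real.pi / (1 - σ) ^ 2 * (N : ℝ) ^ (2 - 2 * σ) := by
  have hN0 : (0 : ℝ) < N := by exact_mod_cast hN
  have h1s : 0 < 1 - σ := by linarith
  have hne : ∀ t : ℝ, ((σ : ℂ) + t * I) - 1 ≠ 0 := by
    intro t h
    have := congrArg Complex.re h
    simp at this; linarith
  have hNC : (N : ℂ) ≠ 0 := by exact_mod_cast hN0.ne'
  calc _ ≤ ∫ t in (-(N : ℝ))..N, (N : ℝ) ^ (2 - 2 * σ) / (1 - σ) ^ 2 * (1 + t ^ 2)⁻¹ := by
        apply intervalIntegral.integral_mono_on (by linarith)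
        · apply Continuous.intervalIntegrable
          apply Continuous.pow
          apply Continuous.norm
          apply Continuous.div _ (by fun_prop) hne
          exact Continuous.const_cpow (by fun_prop) (Or.inl hNC)
        · apply Continuous.intervalIntegrable
          apply Continuous.mul continuous_const
          apply Continuous.inv₀ (by fun_prop)
          intro t; positivity
        intro t ht
        rw [norm_div, div_pow, Complex.norm_natCast_cpow_of_pos (by omega)]
        have e1 : (1 - ((σ : ℂ) + t * I)).re = 1 - σ := by simp
        have e2 : ((N : ℝ) ^ (1 - σ)) ^ 2 = (N : ℝ) ^ (2 - 2 * σ) := by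
          rw [← Real.rpow_natCast, ← Real.rpow_mul hN0.le]; congr 1; push_cast; ring
        have e3 : ‖((σ : ℂ) + t * I) - 1‖ ^ 2 = (1 - σ) ^ 2 + t ^ 2 := by
          rw [← Complex.normSq_eq_norm_sq, show ((σ : ℂ) + t * I) - 1 = ((σ - 1 : ℝ) : ℂ) + t * I by push_cast; ring,
            Complex.normSq_add_mul_I]; ring
        rw [e1, e2, e3, div_mul_eq_mul_div, div_eq_mul_inv, mul_div_assoc]
        gcongr
        rw [← one_div, ← one_div, div_div, div_le_div_iff₀ (by positivity) (by positivity)]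
        have : (1 - σ) ^ 2 ≤ 1 := by nlinarith
        nlinarith [sq_nonneg t]
    _ = (N : ℝ) ^ (2 - 2 * σ) / (1 - σ) ^ 2 * ∫ t in (-(N : ℝ))..N, (1 + t ^ 2)⁻¹ := by
        rw [intervalIntegral.integral_const_mul]
    _ ≤ (N : ℝ) ^ (2 - 2 * σ) / (1 - σ) ^ 2 * Real.pi := by
        gcongr
        rw [intervalIntegral.integral_of_le (by linarith), ← integral_univ_inv_one_add_sq]
        exact setIntegral_le_integral integrable_inv_one_add_sq (Eventually.of_forall fun ξ => by positivity)
    _ = _ := by ring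

noncomputable def XM (M : ℕ) (s : ℂ) : ℂ := ∑ n ∈ Finset.Icc 1 M, (n : ℂ) ^ (-s)

lemma XM_diff (M : ℕ) : Differentiable ℂ (XM M) := by
  unfold XM
  apply Differentiable.fun_sum
  intro n hn
  have : (n : ℂ) ≠ 0 := by
    have := (Finset.mem_Icc.1 hn).1
    exact_mod_cast (by omega : n ≠ 0)
  exact Differentiable.const_cpow (by fun_prop) (Or.inl this)

lemma zeta_sub_meanSq (a b : ℝ) (ha : 1 / 2 < a) (hb : b < 1) : ∃ C : ℝ, 0 < C ∧
    ∀ σ : ℝ, a ≤ σ → σ ≤ b → ∀ M N : ℕ, 1 ≤ N → M ≤ N →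
    ∫ t in (-(N : ℝ))..N, ‖riemannZeta ((σ : ℂ) + t * I) - XM M ((σ : ℂ) + t * I)‖ ^ 2 ≤
      C * (N * ∑ n ∈ Finset.Ioc M N, (n : ℝ) ^ (-(2 * a)) + (N : ℝ) ^ (2 - 2 * a)) := by
  obtain ⟨C1, hC1, hD⟩ := dirichlet_meanSq
  have hpi := Real.pi_pos
  have h1b : 0 < 1 - b := by linarith
  refine ⟨3 * (C1 + (Real.pi / (1 - b) ^ 2 + 4 * Real.pi * Real.exp Real.pi)), by positivity, ?_⟩
  intro σ haσ hσb M N hN hMN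
  have hN0 : (0 : ℝ) < N := by exact_mod_cast hN
  have hN1 : (1 : ℝ) ≤ N := by exact_mod_cast hN
  have hNC : (N : ℂ) ≠ 0 := by exact_mod_cast hN0.ne'
  have hne : ∀ t : ℝ, ((σ : ℂ) + t * I) - 1 ≠ 0 := by
    intro t h
    have := congrArg Complex.re h
    simp at this; linarith
  set c : ℕ → ℂ := fun n => if M < n then (((n : ℝ) ^ (-σ) : ℝ) : ℂ) else 0 with hc
  set D : ℝ → ℂ := fun t => ∑ n ∈ Finset.Icc 1 N, c n * cexp (-(I * t * Real.log n)) with hDd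
  set Q : ℝ → ℂ := fun t => (N : ℂ) ^ (1 - ((σ : ℂ) + t * I)) / (((σ : ℂ) + t * I) - 1) with hQ
  set E : ℝ → ℂ := fun t => ((σ : ℂ) + t * I) * mellin (frN N) (-((σ : ℂ) + t * I)) with hE
  have hDc : Continuous D := by fun_prop
  have hQc : Continuous Q := by
    apply Continuous.div _ (by fun_prop) hne
    exact Continuous.const_cpow (by fun_prop) (Or.inl hNC)
  have hEc : Continuous E := by
    have hcont : Continuous (fun t : ℝ => mellin (frN N) (-((σ : ℂ) + t * I))) := by
      rw [continuous_iff_continuousAt]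
      intro t
      have h := (frN_mellin N hN ((σ : ℂ) + t * I) (by simp; linarith)).2.continuousAt
      exact ContinuousAt.comp (f := fun t : ℝ => -((σ : ℂ) + t * I)) h (by fun_prop)
    fun_prop
  have key : ∀ t : ℝ, riemannZeta ((σ : ℂ) + t * I) - XM M ((σ : ℂ) + t * I) = D t + Q t - E t := by
    intro t
    rw [zeta_formula N hN _ (by simp; linarith) (fun h => hne t (by rw [h]; simp))]
    have hsub : Finset.Icc 1 M ⊆ Finset.Icc 1 N := Finset.Icc_subset_Icc le_rfl hMN
    have : ∑ n ∈ Finset.Icc 1 N, (n : ℂ) ^ (-((σ : ℂ) + t * I)) - XM M ((σ : ℂ) + t * I) = D t := by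
      unfold XM
      rw [← Finset.sum_sdiff hsub, add_sub_cancel_right]
      simp only [hDd]
      rw [← Finset.sum_sdiff hsub]
      rw [Finset.sum_eq_zero (s := Finset.Icc 1 M) (f := fun n : ℕ => c n * cexp (-(I * t * Real.log n))), add_zero]
      · apply Finset.sum_congr rfl
        intro n hn
        have hn' : 1 ≤ n ∧ M < n := by simp at hn; omega
        have hn0 : (0 : ℝ) < n := by exact_mod_cast hn'.1
        have hnC : (n : ℂ) ≠ 0 := by exact_mod_cast hn0.ne'
        simp only [hc, if_pos hn'.2]
        rw [neg_add, Complex.cpow_add _ _ hnC, Complex.ofReal_cpow hn0.le]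
        push_cast
        congr 1
        rw [Complex.cpow_def_of_ne_zero hnC, ← Complex.natCast_log]
        congr 1; ring
      · intro n hn
        have : ¬ M < n := by simp at hn; omega
        simp [hc, this]
    rw [← this]; ring
  have hpt : ∀ t, ‖D t + Q t - E t‖ ^ 2 ≤ 3 * (‖D t‖ ^ 2 + ‖Q t‖ ^ 2 + ‖E t‖ ^ 2) := by
    intro t
    have h1 : ‖D t + Q t - E t‖ ≤ ‖D t‖ + ‖Q t‖ + ‖E t‖ :=
      (norm_sub_le _ _).trans (by gcongr; exact norm_add_le _ _)
    have h2 : ‖D t + Q t - E t‖ ^ 2 ≤ (‖D t‖ + ‖Q t‖ + ‖E t‖) ^ 2 := by gcongr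
    nlinarith [sq_nonneg (‖D t‖ - ‖Q t‖), sq_nonneg (‖D t‖ - ‖E t‖), sq_nonneg (‖E t‖ - ‖Q t‖)]
  simp only [key]
  have s1 : ∫ t in (-(N : ℝ))..N, ‖D t‖ ^ 2 ≤ C1 * (N * ∑ n ∈ Finset.Ioc M N, (n : ℝ) ^ (-(2 * a))) := by
    refine (hD N c hN).trans ?_
    rw [mul_assoc]
    gcongr
    have hsub : Finset.Ioc M N ⊆ Finset.Icc 1 N := by
      intro n hn; simp at hn ⊢; omega
    rw [← Finset.sum_subset hsub]
    · apply Finset.sum_le_sum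
      intro n hn
      have hn' := Finset.mem_Ioc.1 hn
      have hn1 : (1 : ℝ) ≤ n := by exact_mod_cast (by omega : 1 ≤ n)
      simp only [hc, if_pos hn'.1]
      rw [Complex.norm_real, Real.norm_of_nonneg (by positivity), ← Real.rpow_natCast, ← Real.rpow_mul (by positivity)]
      apply Real.rpow_le_rpow_of_exponent_le hn1
      push_cast; linarith
    · intro n hn hn2
      have : ¬ M < n := by simp at hn hn2; omega
      simp [hc, this]
  have hpow : (N : ℝ) ^ (2 - 2 * σ) ≤ (N : ℝ) ^ (2 - 2 * a) :=
    Real.rpow_le_rpow_of_exponent_le hN1 (by linarith)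
  have s2 : ∫ t in (-(N : ℝ))..N, ‖Q t‖ ^ 2 ≤ Real.pi / (1 - b) ^ 2 * (N : ℝ) ^ (2 - 2 * a) := by
    refine (pole_meanSq N hN σ (by linarith) (by linarith)).trans ?_
    gcongr
  have s3 : ∫ t in (-(N : ℝ))..N, ‖E t‖ ^ 2 ≤ 4 * Real.pi * Real.exp Real.pi * (N : ℝ) ^ (2 - 2 * a) := by
    refine (mellin_meanSq N hN σ (by linarith) (by linarith)).trans ?_
    gcongr
  have i1 : IntervalIntegrable (fun t => ‖D t‖ ^ 2) volume (-(N : ℝ)) N := Continuous.intervalIntegrable (by fun_prop) _ _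
  have i2 : IntervalIntegrable (fun t => ‖Q t‖ ^ 2) volume (-(N : ℝ)) N := Continuous.intervalIntegrable (by fun_prop) _ _
  have i3 : IntervalIntegrable (fun t => ‖E t‖ ^ 2) volume (-(N : ℝ)) N := Continuous.intervalIntegrable (by fun_prop) _ _
  have s4 : ∫ t in (-(N : ℝ))..N, ‖D t + Q t - E t‖ ^ 2 ≤
      3 * ((∫ t in (-(N : ℝ))..N, ‖D t‖ ^ 2) + (∫ t in (-(N : ℝ))..N, ‖Q t‖ ^ 2) + ∫ t in (-(N : ℝ))..N, ‖E t‖ ^ 2) := by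
    rw [← intervalIntegral.integral_add i1 i2, ← intervalIntegral.integral_add (i1.add i2) i3,
      ← intervalIntegral.integral_const_mul]
    apply intervalIntegral.integral_mono_on (by linarith)
    · exact Continuous.intervalIntegrable (by fun_prop) _ _
    · exact Continuous.intervalIntegrable (by fun_prop) _ _
    intro t _
    exact hpt t
  have hs0 : 0 ≤ N * ∑ n ∈ Finset.Ioc M N, (n : ℝ) ^ (-(2 * a)) := by positivity
  have hp0 : 0 ≤ (N : ℝ) ^ (2 - 2 * a) := by positivity
  have hx : 0 ≤ Real.pi / (1 - b) ^ 2 := by positivity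
  have hy : 0 ≤ 4 * Real.pi * Real.exp Real.pi := by positivity
  refine s4.trans ?_
  nlinarith [mul_nonneg hx hs0, mul_nonneg hy hs0, mul_nonneg hC1.le hp0]

lemma zeta_approx (a b : ℝ) (ha : 1 / 2 < a) (hb : b < 1) (δ : ℝ) (hδ : 0 < δ) :
    ∃ M0 : ℕ, ∀ M ≥ M0, ∃ T0 : ℝ, ∀ T ≥ T0, ∀ σ : ℝ, a ≤ σ → σ ≤ b →
    ∫ t in (-T)..T, ‖riemannZeta ((σ : ℂ) + t * I) - XM M ((σ : ℂ) + t * I)‖ ^ 2 ≤ δ * T := by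
  obtain ⟨C, hC, h⟩ := zeta_sub_meanSq a b ha hb
  have hsum : Summable (fun n : ℕ => (n : ℝ) ^ (-(2 * a))) := Real.summable_nat_rpow.2 (by linarith)
  have htail := tendsto_sum_nat_add (fun n : ℕ => (n : ℝ) ^ (-(2 * a)))
  have hd : 0 < δ / (4 * C) := by positivity
  obtain ⟨M0, hM0⟩ := eventually_atTop.1 (htail.eventually (gt_mem_nhds hd))
  refine ⟨M0, fun M hM => ?_⟩
  have hp : Tendsto (fun x : ℝ => x ^ (-(2 * a - 1))) atTop (nhds 0) :=
    tendsto_rpow_neg_atTop (by linarith)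
  obtain ⟨T1, hT1⟩ := eventually_atTop.1 (hp.eventually (gt_mem_nhds hd))
  refine ⟨max (max T1 1) M, fun T hT σ hσ1 hσ2 => ?_⟩
  have hTT1 : T1 ≤ T := (le_max_left _ _).trans ((le_max_left _ _).trans hT)
  have hTone : 1 ≤ T := (le_max_right _ _).trans ((le_max_left _ _).trans hT)
  have hTM : (M : ℝ) ≤ T := (le_max_right _ _).trans hT
  set N : ℕ := ⌈T⌉₊ with hN
  have hTN : T ≤ N := Nat.le_ceil T
  have hN2 : (N : ℝ) ≤ 2 * T := by
    have := Nat.ceil_lt_add_one (by linarith : 0 ≤ T)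
    linarith
  have hMN : M ≤ N := by exact_mod_cast hTM.trans hTN
  have hN1 : 1 ≤ N := by exact_mod_cast hTone.trans hTN
  have hN0 : (0 : ℝ) < N := by exact_mod_cast hN1
  have h1 := h σ hσ1 hσ2 M N hN1 hMN
  have hcont : Continuous (fun t : ℝ => ‖riemannZeta ((σ : ℂ) + t * I) - XM M ((σ : ℂ) + t * I)‖ ^ 2) := by
    apply Continuous.pow
    apply Continuous.norm
    apply Continuous.sub
    · rw [continuous_iff_continuousAt]
      intro t
      have hne : ((σ : ℂ) + t * I) ≠ 1 := by
        intro h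
        have := congrArg Complex.re h
        simp at this; linarith
      exact ContinuousAt.comp (f := fun t : ℝ => ((σ : ℂ) + t * I)) (differentiableAt_riemannZeta hne).continuousAt (by fun_prop)
    · exact (XM_diff M).continuous.comp (by fun_prop)
  have h2 : ∫ t in (-T)..T, ‖riemannZeta ((σ : ℂ) + t * I) - XM M ((σ : ℂ) + t * I)‖ ^ 2 ≤
      ∫ t in (-(N : ℝ))..N, ‖riemannZeta ((σ : ℂ) + t * I) - XM M ((σ : ℂ) + t * I)‖ ^ 2 := by
    apply intervalIntegral.integral_mono_interval (by linarith) (by linarith) hTN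
    · exact ae_of_all _ fun t => by positivity
    · exact hcont.intervalIntegrable _ _
  have h3 : ∑ n ∈ Finset.Ioc M N, (n : ℝ) ^ (-(2 * a)) ≤ δ / (4 * C) := by
    have e : Finset.Ioc M N = (Finset.range (N - M)).image (fun k => k + (M + 1)) := by
      ext n; simp only [Finset.mem_Ioc, Finset.mem_image, Finset.mem_range]
      constructor
      · intro hn; exact ⟨n - (M + 1), by omega, by omega⟩
      · rintro ⟨k, hk, rfl⟩; omega
    rw [e, Finset.sum_image (by intro x _ y _ h; simpa using h)]
    refine le_trans ?_ (hM0 (M + 1) (by omega)).le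
    exact ((summable_nat_add_iff (M + 1)).2 hsum).sum_le_tsum _ (fun _ _ => by positivity)
  have h4 : (N : ℝ) ^ (2 - 2 * a) ≤ N * (δ / (4 * C)) := by
    have : (N : ℝ) ^ (2 - 2 * a) = N * (N : ℝ) ^ (-(2 * a - 1)) := by
      rw [← Real.rpow_one_add' hN0.le (by linarith)]; congr 1; ring
    rw [this]
    gcongr
    exact (hT1 _ (hTT1.trans hTN)).le
  calc _ ≤ C * (N * ∑ n ∈ Finset.Ioc M N, (n : ℝ) ^ (-(2 * a)) + (N : ℝ) ^ (2 - 2 * a)) := h2.trans h1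
    _ ≤ C * (N * (δ / (4 * C)) + N * (δ / (4 * C))) := by gcongr
    _ = N * δ / 2 := by field_simp; ring
    _ ≤ 2 * T * δ / 2 := by gcongr
    _ = _ := by ring

lemma zeta_approx_shift (a b B c : ℝ) (ha : 1 / 2 < a) (hb : b < 1) (hc : c ≠ 0)
    (δ : ℝ) (hδ : 0 < δ) :
    ∃ M0 : ℕ, ∀ M ≥ M0, ∃ T0 : ℝ, ∀ T ≥ T0, ∀ z : ℂ, a ≤ z.re → z.re ≤ b → |z.im| ≤ B →
    ∫ t in (0 : ℝ)..T, ‖riemannZeta (z + (c * t : ℝ) * I) - XM M (z + (c * t : ℝ) * I)‖ ^ 2 ≤ δ * T := by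
  obtain ⟨M0, h⟩ := zeta_approx a b ha hb (δ / 2) (by positivity)
  refine ⟨M0, fun M hM => ?_⟩
  obtain ⟨T1, hT1⟩ := h M hM
  have hc0 : 0 < |c| := abs_pos.2 hc
  refine ⟨max (max (T1 / |c|) (B / |c|)) 0, fun T hT z hz1 hz2 hz3 => ?_⟩
  have hT0 : 0 ≤ T := (le_max_right _ _).trans hT
  have hTa : T1 ≤ |c| * T := by
    have := (le_max_left _ _).trans ((le_max_left _ _).trans hT)
    rw [div_le_iff₀ hc0] at this; linarith
  have hTb : B ≤ |c| * T := by
    have := (le_max_right _ _).trans ((le_max_left _ _).trans hT)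
    rw [div_le_iff₀ hc0] at this; linarith
  have hB : 0 ≤ B := (abs_nonneg _).trans hz3
  set f : ℝ → ℝ := fun t => ‖riemannZeta ((z.re : ℂ) + t * I) - XM M ((z.re : ℂ) + t * I)‖ ^ 2 with hf
  have hcont : Continuous f := by
    apply Continuous.pow
    apply Continuous.norm
    apply Continuous.sub
    · rw [continuous_iff_continuousAt]
      intro t
      have hne : ((z.re : ℂ) + t * I) ≠ 1 := by
        intro h
        have := congrArg Complex.re h
        simp at this; linarith
      exact ContinuousAt.comp (f := fun t : ℝ => ((z.re : ℂ) + t * I)) (differentiableAt_riemannZeta hne).continuousAt (by fun_prop)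
    · exact (XM_diff M).continuous.comp (by fun_prop)
  have e : ∀ t : ℝ, z + (c * t : ℝ) * I = (z.re : ℂ) + ((z.im + c * t : ℝ) : ℂ) * I := by
    intro t
    apply Complex.ext <;> simp
  have e1 : ∫ t in (0 : ℝ)..T, ‖riemannZeta (z + (c * t : ℝ) * I) - XM M (z + (c * t : ℝ) * I)‖ ^ 2 =
      ∫ t in (0 : ℝ)..T, f (z.im + c * t) := by
    simp only [e, hf]
  rw [e1, intervalIntegral.integral_comp_add_mul _ hc, smul_eq_mul]
  have hmain := hT1 (|c| * T + B) (by linarith) z.re hz1 hz2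
  have hle : |∫ t in (z.im + c * 0)..(z.im + c * T), f t| ≤ ∫ t in (-(|c| * T + B))..(|c| * T + B), f t := by
    have hcT : |c * T| = |c| * T := by rw [abs_mul, abs_of_nonneg hT0]
    have b1 := abs_le.1 hz3
    have b2 := abs_le.1 hcT.le
    have hsub : Set.uIoc (z.im + c * 0) (z.im + c * T) ⊆ Set.Ioc (-(|c| * T + B)) (|c| * T + B) := by
      intro x hx
      rw [Set.uIoc, Set.mem_Ioc] at hx
      have hcT0 : 0 ≤ |c| * T := by positivity
      constructor
      · refine lt_of_le_of_lt ?_ hx.1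
        apply le_min <;> linarith
      · refine hx.2.trans ?_
        apply max_le <;> linarith
    have hpos : -(|c| * T + B) ≤ |c| * T + B := by nlinarith [mul_nonneg hc0.le hT0]
    rw [← Real.norm_eq_abs, intervalIntegral.norm_intervalIntegral_eq, intervalIntegral.integral_of_le hpos, Real.norm_of_nonneg]
    · apply setIntegral_mono_set
      · exact (hcont.intervalIntegrable _ _).1
      · exact ae_of_all _ fun t => by simp only [hf]; positivity
      · exact hsub.eventuallyLE
    · exact integral_nonneg fun t => by simp only [hf]; positivity
  calc c⁻¹ * ∫ t in (z.im + c * 0)..(z.im + c * T), f t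
      ≤ |c⁻¹ * ∫ t in (z.im + c * 0)..(z.im + c * T), f t| := le_abs_self _
    _ = |c|⁻¹ * |∫ t in (z.im + c * 0)..(z.im + c * T), f t| := by rw [abs_mul, abs_inv]
    _ ≤ |c|⁻¹ * (δ / 2 * (|c| * T + B)) := by gcongr; exact hle.trans hmain
    _ ≤ |c|⁻¹ * (δ / 2 * (|c| * T + |c| * T)) := by gcongr
    _ = _ := by field_simp; ring

lemma meanSq_freq {ι : Type*} [DecidableEq ι] (J : Finset ι) (l : ι → ℝ) (hl : Set.InjOn l J) (c : ι → ℂ)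
    (hc : ∀ j ∈ J, ‖c j‖ ≤ 1) (T : ℝ) (hT : 0 ≤ T) :
    |(∫ t in (0 : ℝ)..T, ‖∑ j ∈ J, c j * cexp ((l j * t : ℝ) * I)‖ ^ 2) - T * ∑ j ∈ J, ‖c j‖ ^ 2| ≤
      ∑ j ∈ J, ∑ k ∈ J, 2 / |l j - l k| := by
  set F : ι → ι → ℝ → ℂ := fun j k t => c j * (starRingEnd ℂ) (c k) * cexp (((l j - l k : ℝ) * I) * t) with hF
  have hexp : ∀ t : ℝ, ((‖∑ j ∈ J, c j * cexp ((l j * t : ℝ) * I)‖ ^ 2 : ℝ) : ℂ) =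
      ∑ j ∈ J, ∑ k ∈ J, F j k t := by
    intro t
    rw [← Complex.normSq_eq_norm_sq, ← Complex.mul_conj, map_sum, Finset.sum_mul_sum]
    apply Finset.sum_congr rfl; intro m _
    apply Finset.sum_congr rfl; intro n _
    simp only [hF, map_mul, ← Complex.exp_conj, conj_I, conj_ofReal]
    rw [mul_mul_mul_comm, ← Complex.exp_add]
    congr 2
    push_cast; ring
  have e1 : (((∫ t in (0 : ℝ)..T, ‖∑ j ∈ J, c j * cexp ((l j * t : ℝ) * I)‖ ^ 2) : ℝ) : ℂ) =
      ∑ j ∈ J, ∑ k ∈ J, ∫ t in (0 : ℝ)..T, F j k t := by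
    rw [← intervalIntegral.integral_ofReal]
    simp only [hexp]
    rw [intervalIntegral.integral_finsetSum]
    · apply Finset.sum_congr rfl; intro m _
      rw [intervalIntegral.integral_finsetSum]
      intro k _
      exact Continuous.intervalIntegrable (by fun_prop) _ _
    · intro k _
      exact Continuous.intervalIntegrable (by fun_prop) _ _
  have e2 : (((T * ∑ j ∈ J, ‖c j‖ ^ 2) : ℝ) : ℂ) = ∑ j ∈ J, ∑ k ∈ J, if j = k then (T : ℂ) * ((‖c j‖ ^ 2 : ℝ) : ℂ) else 0 := by
    push_cast
    rw [Finset.mul_sum]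
    apply Finset.sum_congr rfl; intro m hm
    rw [Finset.sum_ite_eq, if_pos hm]
  rw [← Real.norm_eq_abs, ← Complex.norm_real, ofReal_sub, e1, e2, ← Finset.sum_sub_distrib]
  refine (norm_sum_le _ _).trans (Finset.sum_le_sum fun j hj => ?_)
  rw [← Finset.sum_sub_distrib]
  refine (norm_sum_le _ _).trans (Finset.sum_le_sum fun k hk => ?_)
  split_ifs with hjk
  · subst hjk
    have : (∫ t in (0 : ℝ)..T, F j j t) = T * ((‖c j‖ ^ 2 : ℝ) : ℂ) := by
      simp only [hF, Complex.mul_conj, Complex.normSq_eq_norm_sq]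
      simp
    rw [this]; simp
  · have hne : l j - l k ≠ 0 := fun h => hjk (hl hj hk (by linarith))
    have hne2 : ((l j - l k : ℝ) : ℂ) * I ≠ 0 := mul_ne_zero (by exact_mod_cast hne) I_ne_zero
    simp only [hF, sub_zero]
    rw [intervalIntegral.integral_const_mul, integral_exp_mul_complex hne2, norm_mul, norm_mul, norm_div, RCLike.norm_conj]
    have hn : ‖((l j - l k : ℝ) : ℂ) * I‖ = |l j - l k| := by
      rw [norm_mul, Complex.norm_I, mul_one, Complex.norm_real, Real.norm_eq_abs]
    rw [hn]
    have hb : ‖cexp (((l j - l k : ℝ) : ℂ) * I * T) - cexp (((l j - l k : ℝ) : ℂ) * I * (0 : ℝ))‖ ≤ 2 := by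
      refine (norm_sub_le _ _).trans ?_
      have : ∀ x : ℝ, ‖cexp (((l j - l k : ℝ) : ℂ) * I * x)‖ = 1 := by
        intro x
        rw [show ((l j - l k : ℝ) : ℂ) * I * x = (((l j - l k) * x : ℝ) : ℂ) * I by push_cast; ring,
          Complex.norm_exp_ofReal_mul_I]
      rw [this, this]; norm_num
    calc _ ≤ 1 * (2 / |l j - l k|) := by
          have : ‖c j‖ * ‖c k‖ ≤ 1 := mul_le_one₀ (hc j hj) (norm_nonneg _) (hc k hk)
          gcongr
      _ = _ := one_mul _

lemma folner (N : ℕ) (ε : ℝ) (hε : 0 < ε) : ∃ S : Finset ℚ, S.Nonempty ∧ (∀ q ∈ S, 0 < q) ∧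
    ∀ n ∈ Finset.Icc 1 N, ((S.filter (fun q => ¬ (n : ℚ) * q ∈ S)).card : ℝ) ≤ ε * S.card := by
  set w := (N.factorial).primeFactors.card with hw
  have hlim : Tendsto (fun Q : ℕ => (1 + 1 / (Q : ℝ)) ^ w) atTop (nhds 1) := by
    have h1 : Tendsto (fun Q : ℕ => (1 + 1 / (Q : ℝ))) atTop (nhds (1 + 0)) :=
      tendsto_const_nhds.add tendsto_one_div_atTop_nhds_zero_nat
    simpa using h1.pow w
  obtain ⟨Q, hQ1, hQ2⟩ := ((hlim.eventually (gt_mem_nhds (by linarith : (1 : ℝ) < 1 + ε))).and (eventually_ge_atTop 1)).exists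
  have hf0 : N.factorial ≠ 0 := Nat.factorial_ne_zero N
  have hcard : ∀ Q : ℕ, 1 ≤ Q → ((N.factorial ^ Q).divisors.card : ℝ) =
      ∏ p ∈ (N.factorial).primeFactors, ((Q * (N.factorial).factorization p : ℕ) + 1 : ℝ) := by
    intro Q hQ
    rw [Nat.card_divisors (pow_ne_zero _ hf0), Nat.primeFactors_pow _ (by omega)]
    push_cast
    apply Finset.prod_congr rfl
    intro p _
    simp
  have hratio : ((N.factorial ^ (Q + 1)).divisors.card : ℝ) ≤ (1 + ε) * (N.factorial ^ Q).divisors.card := by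
    rw [hcard (Q + 1) (by omega), hcard Q hQ2]
    calc _ ≤ ∏ p ∈ (N.factorial).primeFactors, ((1 + 1 / (Q : ℝ)) * ((Q * (N.factorial).factorization p : ℕ) + 1 : ℝ)) := by
          apply Finset.prod_le_prod
          · intro p _; positivity
          · intro p _
            have : (0 : ℝ) < Q := by exact_mod_cast hQ2
            push_cast
            have h0 : (0 : ℝ) ≤ (N.factorial).factorization p := by positivity
            have : (1 + 1 / (Q : ℝ)) * (Q * (N.factorial).factorization p + 1) = Q * (N.factorial).factorization p + 1 + (N.factorial).factorization p + 1 / Q := by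
              field_simp; ring
            rw [this]
            have : 0 < 1 / (Q : ℝ) := by positivity
            linarith
      _ = (1 + 1 / (Q : ℝ)) ^ w * ∏ p ∈ (N.factorial).primeFactors, ((Q * (N.factorial).factorization p : ℕ) + 1 : ℝ) := by
          rw [Finset.prod_mul_distrib, Finset.prod_const]
      _ ≤ _ := by
          gcongr
  have hinj : Function.Injective (fun n : ℕ => (n : ℚ)) := Nat.cast_injective
  refine ⟨(N.factorial ^ (Q + 1)).divisors.image (fun n : ℕ => (n : ℚ)), ?_, ?_, ?_⟩
  · exact ⟨1, Finset.mem_image.2 ⟨1, by simp [hf0], by simp⟩⟩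
  · intro q hq
    obtain ⟨k, hk, rfl⟩ := Finset.mem_image.1 hq
    exact_mod_cast Nat.pos_of_mem_divisors hk
  · intro n hn
    have hn' := Finset.mem_Icc.1 hn
    have hnf : n ∣ N.factorial := Nat.dvd_factorial hn'.1 hn'.2
    rw [Finset.card_image_of_injective _ hinj]
    have hsub : (N.factorial ^ Q).divisors ⊆ (N.factorial ^ (Q + 1)).divisors :=
      Nat.divisors_subset_of_dvd (pow_ne_zero _ hf0) (pow_dvd_pow _ (by omega))
    have hle : (((N.factorial ^ (Q + 1)).divisors.image (fun n : ℕ => (n : ℚ))).filter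
        (fun q => ¬ (n : ℚ) * q ∈ (N.factorial ^ (Q + 1)).divisors.image (fun n : ℕ => (n : ℚ)))).card ≤
        ((N.factorial ^ (Q + 1)).divisors \ (N.factorial ^ Q).divisors).card := by
      rw [← Finset.card_image_of_injective _ hinj]
      apply Finset.card_le_card
      intro q hq
      obtain ⟨h1, h2⟩ := Finset.mem_filter.1 hq
      obtain ⟨k, hk, rfl⟩ := Finset.mem_image.1 h1
      refine Finset.mem_image.2 ⟨k, Finset.mem_sdiff.2 ⟨hk, fun hk2 => h2 ?_⟩, rfl⟩
      refine Finset.mem_image.2 ⟨n * k, ?_, by push_cast; rfl⟩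
      rw [Nat.mem_divisors]
      refine ⟨?_, pow_ne_zero _ hf0⟩
      rw [pow_succ, mul_comm]
      exact mul_dvd_mul (Nat.dvd_of_mem_divisors hk2) hnf
    have h3 := Finset.card_sdiff_add_card_eq_card hsub
    have h3' : (((N.factorial ^ (Q + 1)).divisors \ (N.factorial ^ Q).divisors).card : ℝ) + (N.factorial ^ Q).divisors.card = (N.factorial ^ (Q + 1)).divisors.card := by
      exact_mod_cast h3
    have h4 : ((N.factorial ^ Q).divisors.card : ℝ) ≤ (N.factorial ^ (Q + 1)).divisors.card := by
      exact_mod_cast Finset.card_le_card hsub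
    have hle' : ((((N.factorial ^ (Q + 1)).divisors.image (fun n : ℕ => (n : ℚ))).filter
        (fun q => ¬ (n : ℚ) * q ∈ (N.factorial ^ (Q + 1)).divisors.image (fun n : ℕ => (n : ℚ)))).card : ℝ) ≤
        ((N.factorial ^ (Q + 1)).divisors \ (N.factorial ^ Q).divisors).card := by exact_mod_cast hle
    nlinarith

lemma sum_shift {α : Type*} [AddCommMonoid α] (S R : Finset ℚ) (n : ℕ) (hn : 1 ≤ n)
    (hR : ∀ k ∈ S, k / n ∈ R) (h : ℚ → α) :
    (∑ q ∈ R, if (n : ℚ) * q ∈ S then h q else 0) = ∑ k ∈ S, h (k / n) := by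
  have hn0 : (n : ℚ) ≠ 0 := by exact_mod_cast (by omega : n ≠ 0)
  rw [← Finset.sum_filter]
  symm
  apply Finset.sum_nbij' (fun k : ℚ => k / (n : ℚ)) (fun q : ℚ => (n : ℚ) * q)
  · intro k hk
    refine Finset.mem_filter.2 ⟨hR k hk, ?_⟩
    rw [mul_div_cancel₀ _ hn0]; exact hk
  · intro q hq; exact (Finset.mem_filter.1 hq).2
  · intro k hk; exact mul_div_cancel₀ _ hn0
  · intro q hq; field_simp
  · intro k hk; rfl

lemma sum_self_ind {α : Type*} [AddCommMonoid α] (S R : Finset ℚ)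
    (hR : S ⊆ R) (h : ℚ → α) :
    (∑ q ∈ R, if q ∈ S then h q else 0) = ∑ k ∈ S, h k := by
  rw [← Finset.sum_filter]
  congr 1
  ext q; simp; exact fun hq => hR hq

noncomputable def wt (d : ℝ) (S : Finset ℚ) (t : ℝ) : ℂ :=
  ∑ q ∈ S, cexp ((((d - 1) * Real.log q) * t : ℝ) * I)

noncomputable def gco (S : Finset ℚ) (n : ℕ) (q : ℚ) : ℝ :=
  (if q ∈ S then 1 else 0) - (if (n : ℚ) * q ∈ S then 1 else 0)

lemma wt_id (d : ℝ) (S R : Finset ℚ) (M : ℕ) (hS : ∀ q ∈ S, 0 < q) (hSR : S ⊆ R)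
    (hR : ∀ n ∈ Finset.Icc 1 M, ∀ k ∈ S, k / n ∈ R) (z : ℂ) (t : ℝ) :
    wt d S t * (XM M (z + t * I) - XM M (z + (d * t : ℝ) * I)) =
    ∑ j ∈ Finset.Icc 1 M ×ˢ R, ((j.1 : ℂ) ^ (-z) * gco S j.1 j.2) *
      cexp (((-Real.log j.1 + (d - 1) * Real.log j.2) * t : ℝ) * I) := by
  rw [Finset.sum_product]
  unfold XM
  rw [← Finset.sum_sub_distrib, Finset.mul_sum]
  apply Finset.sum_congr rfl
  intro n hn
  have hn1 := (Finset.mem_Icc.1 hn).1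
  have hnC : (n : ℂ) ≠ 0 := by exact_mod_cast (by omega : n ≠ 0)
  have hnR : (n : ℝ) ≠ 0 := by exact_mod_cast (by omega : n ≠ 0)
  have c1 : ∀ y : ℝ, (n : ℂ) ^ (-(z + y * I)) = (n : ℂ) ^ (-z) * cexp ((-Real.log n * y : ℝ) * I) := by
    intro y
    rw [neg_add, Complex.cpow_add _ _ hnC]
    congr 1
    rw [Complex.cpow_def_of_ne_zero hnC, ← Complex.natCast_log]
    congr 1
    rw [ofReal_mul, ofReal_neg]; ring
  rw [c1, c1]
  have s1 : (∑ q ∈ R, if q ∈ S then cexp ((((d - 1) * Real.log q) * t : ℝ) * I) else 0) = wt d S t :=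
    sum_self_ind S R hSR _
  have s2 : (∑ q ∈ R, if (n : ℚ) * q ∈ S then cexp ((((d - 1) * Real.log q) * t : ℝ) * I) else 0) =
      cexp ((-Real.log n * ((d - 1) * t) : ℝ) * I) * wt d S t := by
    rw [sum_shift S R n hn1 (hR n hn)]
    unfold wt
    rw [Finset.mul_sum]
    apply Finset.sum_congr rfl
    intro k hk
    have hk0 : (k : ℝ) ≠ 0 := by exact_mod_cast (hS k hk).ne'
    rw [← Complex.exp_add, ← add_mul, ← ofReal_add]
    congr 3
    push_cast
    rw [Real.log_div hk0 hnR]; ring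
  have s3 : ∑ x ∈ R, (n : ℂ) ^ (-z) * (gco S n x : ℂ) * cexp (((-Real.log n + (d - 1) * Real.log x) * t : ℝ) * I) =
     (n : ℂ) ^ (-z) * cexp ((-Real.log n * t : ℝ) * I) * (∑ q ∈ R, ((if q ∈ S then cexp ((((d - 1) * Real.log q) * t : ℝ) * I) else 0) - (if (n : ℚ) * q ∈ S then cexp ((((d - 1) * Real.log q) * t : ℝ) * I) else 0))) := by
    rw [Finset.mul_sum]
    apply Finset.sum_congr rfl
    intro x _
    have : cexp (((-Real.log n + (d - 1) * Real.log x) * t : ℝ) * I) =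
        cexp ((-Real.log n * t : ℝ) * I) * cexp ((((d - 1) * Real.log x) * t : ℝ) * I) := by
      rw [← Complex.exp_add, ← add_mul, ← ofReal_add]; congr 3; ring
    rw [this]
    unfold gco
    split_ifs <;> (push_cast; ring)
  rw [s3, Finset.sum_sub_distrib, s1, s2]
  have : cexp ((-Real.log n * (d * t) : ℝ) * I) = cexp ((-Real.log n * t : ℝ) * I) * cexp ((-Real.log n * ((d - 1) * t) : ℝ) * I) := by
    rw [← Complex.exp_add, ← add_mul, ← ofReal_add]; congr 3; ring
  rw [this]; ring

lemma gco_sum (S R : Finset ℚ) (n : ℕ) (hn : 1 ≤ n) (hSR : S ⊆ R)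
    (hR : ∀ k ∈ S, k / n ∈ R) :
    ∑ q ∈ R, (gco S n q) ^ 2 = 2 * ((S.filter (fun q => ¬ (n : ℚ) * q ∈ S)).card : ℝ) := by
  have e : ∀ q, (gco S n q) ^ 2 = (if q ∈ S then (1 : ℝ) else 0) + (if (n : ℚ) * q ∈ S then (1 : ℝ) else 0)
      - 2 * (if q ∈ S then (if (n : ℚ) * q ∈ S then (1 : ℝ) else 0) else 0) := by
    intro q; unfold gco; split_ifs <;> norm_num
  simp only [e]
  rw [Finset.sum_sub_distrib, Finset.sum_add_distrib, sum_self_ind S R hSR, sum_shift S R n hn hR,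
    ← Finset.mul_sum, sum_self_ind S R hSR, ← Finset.sum_filter]
  have := Finset.card_filter_add_card_filter_not (s := S) (fun q => (n : ℚ) * q ∈ S)
  simp only [Finset.sum_const, nsmul_eq_mul, mul_one]
  have h : ((S.filter (fun q => (n : ℚ) * q ∈ S)).card : ℝ) + (S.filter (fun q => ¬ (n : ℚ) * q ∈ S)).card = S.card := by
    exact_mod_cast this
  linarith

set_option maxHeartbeats 1000000 in
lemma weight_exists (d : ℝ) (hd1 : d ≠ 1)
    (gs : ∀ p q : ℚ, 0 < p → 0 < q → (d - 1) * Real.log p = Real.log q → p = 1)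
    (a : ℝ) (ha : 1 / 2 < a) (δ : ℝ) (hδ : 0 < δ) :
    ∃ (W : ℝ → ℝ) (B : ℝ), Continuous W ∧ (∀ t, 0 ≤ W t) ∧ 0 < B ∧ (∀ t, W t ≤ B) ∧
      (∃ T0 : ℝ, ∀ T ≥ T0, T / 2 ≤ ∫ t in (0 : ℝ)..T, W t) ∧
      ∀ M : ℕ, ∃ T0 : ℝ, ∀ T ≥ T0, ∀ z : ℂ, a ≤ z.re →
        ∫ t in (0 : ℝ)..T, W t * ‖XM M (z + t * I) - XM M (z + (d * t : ℝ) * I)‖ ^ 2 ≤ δ * T := by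
  have hsum : Summable (fun n : ℕ => (n : ℝ) ^ (-(2 * a))) := Real.summable_nat_rpow.2 (by linarith)
  have htail := tendsto_sum_nat_add (fun n : ℕ => (n : ℝ) ^ (-(2 * a)))
  obtain ⟨N0, hN0⟩ := (htail.eventually (gt_mem_nhds (by positivity : 0 < δ / 8))).exists
  set Z : ℝ := ∑' n : ℕ, (n : ℝ) ^ (-(2 * a)) with hZ
  have hZ0 : 0 ≤ Z := tsum_nonneg fun n => by positivity
  obtain ⟨S, hSne, hSpos, hSF⟩ := folner N0 (δ / (8 * (Z + 1))) (by positivity)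
  have hSc : (0 : ℝ) < S.card := by exact_mod_cast hSne.card_pos
  have hSc1 : (1 : ℝ) ≤ S.card := by exact_mod_cast hSne.card_pos
  have hloginj : ∀ p q : ℚ, 0 < p → 0 < q → Real.log p = Real.log q → p = q := by
    intro p q hp hq h
    have := Real.log_injOn_pos (show (p : ℝ) ∈ Set.Ioi 0 by simpa using hp) (show (q : ℝ) ∈ Set.Ioi 0 by simpa using hq) h
    exact_mod_cast this
  have hwc : Continuous (wt d S) := by unfold wt; fun_prop
  refine ⟨fun t => ‖wt d S t‖ ^ 2 / S.card, S.card, by fun_prop, fun t => by positivity, hSc, ?_, ?_, ?_⟩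
  · intro t
    have : ‖wt d S t‖ ≤ S.card := by
      unfold wt
      refine (norm_sum_le _ _).trans ?_
      simp only [Complex.norm_exp_ofReal_mul_I]; simp
    rw [div_le_iff₀ hSc, ← sq]
    gcongr
  · set l : ℚ → ℝ := fun q => (d - 1) * Real.log q with hl
    have hinj : Set.InjOn l S := by
      intro p hp q hq h
      exact hloginj p q (hSpos p hp) (hSpos q hq) (mul_left_cancel₀ (sub_ne_zero.2 hd1) h)
    set K0 := ∑ j ∈ S, ∑ k ∈ S, 2 / |l j - l k| with hK0
    have hK00 : 0 ≤ K0 := Finset.sum_nonneg fun _ _ => Finset.sum_nonneg fun _ _ => by positivity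
    refine ⟨2 * K0, fun T hT => ?_⟩
    have h := meanSq_freq S l hinj (fun _ => 1) (by simp) T (by linarith)
    simp only [one_mul] at h
    have h2 := (abs_le.1 h).1
    rw [intervalIntegral.integral_div, le_div_iff₀ hSc]
    simp at h2
    have e : ∫ t in (0 : ℝ)..T, ‖wt d S t‖ ^ 2 = ∫ t in (0 : ℝ)..T, ‖∑ j ∈ S, cexp ((l j : ℂ) * t * I)‖ ^ 2 := by
      unfold wt; simp only [hl]; push_cast; rfl
    rw [e]
    have : (T / 2) * S.card ≥ K0 := by nlinarith
    linarith
  · intro M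
    set R : Finset ℚ := S ∪ (Finset.Icc 1 M).biUnion (fun n => S.image (fun k => k / (n : ℚ))) with hRdef
    have hSR : S ⊆ R := Finset.subset_union_left
    have hR : ∀ n ∈ Finset.Icc 1 M, ∀ k ∈ S, k / n ∈ R := by
      intro n hn k hk
      exact Finset.mem_union_right _ (Finset.mem_biUnion.2 ⟨n, hn, Finset.mem_image.2 ⟨k, hk, rfl⟩⟩)
    have hRpos : ∀ q ∈ R, 0 < q := by
      intro q hq
      rcases Finset.mem_union.1 hq with h | h
      · exact hSpos q h
      · obtain ⟨n, hn, h⟩ := Finset.mem_biUnion.1 h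
        obtain ⟨k, hk, rfl⟩ := Finset.mem_image.1 h
        have h1 := hSpos k hk
        have h2 : (0 : ℚ) < n := by exact_mod_cast (Finset.mem_Icc.1 hn).1
        positivity
    set J := Finset.Icc 1 M ×ˢ R with hJ
    set l : ℕ × ℚ → ℝ := fun j => -Real.log j.1 + (d - 1) * Real.log j.2 with hl
    have hinj : Set.InjOn l J := by
      rintro ⟨n, p⟩ hp ⟨m, q⟩ hq h
      have hp' := Finset.mem_product.1 hp
      have hq' := Finset.mem_product.1 hq
      have hn1 : (0 : ℝ) < n := by exact_mod_cast (Finset.mem_Icc.1 hp'.1).1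
      have hm1 : (0 : ℝ) < m := by exact_mod_cast (Finset.mem_Icc.1 hq'.1).1
      have hp1 := hRpos _ hp'.2
      have hq1 := hRpos _ hq'.2
      have hp2 : (0 : ℝ) < p := by exact_mod_cast hp1
      have hq2 : (0 : ℝ) < q := by exact_mod_cast hq1
      simp only [hl] at h
      have hpq : p / q = 1 := by
        apply gs (p / q) (n / m) (by positivity) (by
          have : (0 : ℚ) < n := by exact_mod_cast hn1
          have : (0 : ℚ) < m := by exact_mod_cast hm1
          positivity)
        push_cast
        rw [Real.log_div hp2.ne' hq2.ne', Real.log_div hn1.ne' hm1.ne']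
        linarith
      have hpq2 : p = q := by
        rwa [div_eq_one_iff_eq hq1.ne'] at hpq
      subst hpq2
      have : Real.log n = Real.log m := by linarith
      have := Real.log_injOn_pos hn1 hm1 this
      have : n = m := by exact_mod_cast this
      rw [this]
    set K0 := ∑ j ∈ J, ∑ k ∈ J, 2 / |l j - l k| with hK0
    have hK00 : 0 ≤ K0 := Finset.sum_nonneg fun _ _ => Finset.sum_nonneg fun _ _ => by positivity
    refine ⟨2 * K0 / δ, fun T hT z hz => ?_⟩
    have hT0 : 0 ≤ T := le_trans (by positivity) hT
    have hKT : K0 ≤ δ / 2 * T := by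
      rw [ge_iff_le, div_le_iff₀ hδ] at hT; linarith
    set c : ℕ × ℚ → ℂ := fun j => (j.1 : ℂ) ^ (-z) * gco S j.1 j.2 with hc
    have hnz : ∀ n : ℕ, n ∈ Finset.Icc 1 M → ‖(n : ℂ) ^ (-z)‖ ≤ (n : ℝ) ^ (-a) := by
      intro n hn
      have hn1 := (Finset.mem_Icc.1 hn).1
      rw [Complex.norm_natCast_cpow_of_pos (by omega)]
      apply Real.rpow_le_rpow_of_exponent_le (by exact_mod_cast hn1)
      simpa using hz
    have hc1 : ∀ j ∈ J, ‖c j‖ ≤ 1 := by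
      rintro ⟨n, q⟩ hj
      have hn := (Finset.mem_product.1 hj).1
      have hn1 : (1 : ℝ) ≤ n := by exact_mod_cast (Finset.mem_Icc.1 hn).1
      simp only [hc, norm_mul]
      apply mul_le_one₀ ((hnz n hn).trans (Real.rpow_le_one_of_one_le_of_nonpos hn1 (by linarith))) (norm_nonneg _)
      rw [Complex.norm_real]
      unfold gco; split_ifs <;> norm_num
    have h := (abs_le.1 (meanSq_freq J l hinj c hc1 T hT0)).2
    have e : ∀ t : ℝ, ‖wt d S t‖ ^ 2 / S.card * ‖XM M (z + t * I) - XM M (z + (d * t : ℝ) * I)‖ ^ 2 =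
        (S.card : ℝ)⁻¹ * ‖∑ j ∈ J, c j * cexp ((l j * t : ℝ) * I)‖ ^ 2 := by
      intro t
      rw [← wt_id d S R M hSpos hSR hR z t, norm_mul, mul_pow]; ring
    simp only [e]
    rw [intervalIntegral.integral_const_mul]
    have hcs : ∑ j ∈ J, ‖c j‖ ^ 2 ≤ δ / 2 * S.card := by
      rw [hJ, Finset.sum_product]
      calc ∑ n ∈ Finset.Icc 1 M, ∑ q ∈ R, ‖c (n, q)‖ ^ 2
          ≤ ∑ n ∈ Finset.Icc 1 M, (n : ℝ) ^ (-(2 * a)) * (2 * ((S.filter (fun q => ¬ (n : ℚ) * q ∈ S)).card : ℝ)) := by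
            apply Finset.sum_le_sum
            intro n hn
            rw [← gco_sum S R n (Finset.mem_Icc.1 hn).1 hSR (hR n hn), Finset.mul_sum]
            apply Finset.sum_le_sum
            intro q _
            simp only [hc, norm_mul, mul_pow, Complex.norm_real, Real.norm_eq_abs, sq_abs]
            gcongr
            calc _ ≤ ((n : ℝ) ^ (-a)) ^ 2 := by gcongr; exact hnz n hn
              _ = _ := by rw [← Real.rpow_natCast, ← Real.rpow_mul (by positivity)]; congr 1; push_cast; ring
        _ ≤ ∑ n ∈ Finset.Icc 1 M, ((n : ℝ) ^ (-(2 * a)) * (2 * (δ / (8 * (Z + 1)) * S.card)) +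
              (if N0 ≤ n then (n : ℝ) ^ (-(2 * a)) else 0) * (2 * S.card)) := by
            apply Finset.sum_le_sum
            intro n hn
            by_cases hnN : n ≤ N0
            · have := hSF n (Finset.mem_Icc.2 ⟨(Finset.mem_Icc.1 hn).1, hnN⟩)
              have h2 : 0 ≤ (if N0 ≤ n then (n : ℝ) ^ (-(2 * a)) else 0) * (2 * S.card) := by
                split_ifs <;> positivity
              have h3 : (n : ℝ) ^ (-(2 * a)) * (2 * ((S.filter (fun q => ¬ (n : ℚ) * q ∈ S)).card : ℝ)) ≤ (n : ℝ) ^ (-(2 * a)) * (2 * (δ / (8 * (Z + 1)) * S.card)) := by gcongr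
              linarith
            · rw [if_pos (by omega)]
              have : ((S.filter (fun q => ¬ (n : ℚ) * q ∈ S)).card : ℝ) ≤ S.card := by
                exact_mod_cast Finset.card_filter_le _ _
              have h3 : (n : ℝ) ^ (-(2 * a)) * (2 * ((S.filter (fun q => ¬ (n : ℚ) * q ∈ S)).card : ℝ)) ≤ (n : ℝ) ^ (-(2 * a)) * (2 * S.card) := by gcongr
              have h4 : 0 ≤ (n : ℝ) ^ (-(2 * a)) * (2 * (δ / (8 * (Z + 1)) * S.card)) := by positivity
              linarith
        _ = (∑ n ∈ Finset.Icc 1 M, (n : ℝ) ^ (-(2 * a))) * (2 * (δ / (8 * (Z + 1)) * S.card)) +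
              (∑ n ∈ Finset.Icc 1 M, if N0 ≤ n then (n : ℝ) ^ (-(2 * a)) else 0) * (2 * S.card) := by
            rw [Finset.sum_add_distrib, Finset.sum_mul, Finset.sum_mul]
        _ ≤ Z * (2 * (δ / (8 * (Z + 1)) * S.card)) + δ / 8 * (2 * S.card) := by
            gcongr
            · exact hsum.sum_le_tsum _ (fun _ _ => by positivity)
            · rw [← Finset.sum_filter]
              refine le_trans ?_ hN0.le
              have hinj2 : Set.InjOn (fun n : ℕ => n - N0) ((Finset.Icc 1 M).filter (fun n => N0 ≤ n)) := by
                intro x hx y hy hxy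
                simp at hx hy hxy; omega
              have : ∑ n ∈ (Finset.Icc 1 M).filter (fun n => N0 ≤ n), (n : ℝ) ^ (-(2 * a)) =
                  ∑ k ∈ ((Finset.Icc 1 M).filter (fun n => N0 ≤ n)).image (fun n : ℕ => n - N0), ((k + N0 : ℕ) : ℝ) ^ (-(2 * a)) := by
                rw [Finset.sum_image hinj2]
                apply Finset.sum_congr rfl
                intro n hn
                have := (Finset.mem_filter.1 hn).2
                rw [Nat.sub_add_cancel this]
              rw [this]
              exact ((summable_nat_add_iff N0).2 hsum).sum_le_tsum _ (fun _ _ => by positivity)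
        _ ≤ _ := by
            have : Z * (2 * (δ / (8 * (Z + 1)) * S.card)) = (Z / (Z + 1)) * (δ / 4 * S.card) := by
              field_simp; ring
            rw [this]
            have h1 : Z / (Z + 1) ≤ 1 := by rw [div_le_one (by positivity)]; linarith
            have h2 : 0 ≤ δ / 4 * S.card := by positivity
            nlinarith
    have h5 : ∫ t in (0 : ℝ)..T, ‖∑ j ∈ J, c j * cexp ((l j * t : ℝ) * I)‖ ^ 2 ≤ T * (δ / 2 * S.card) + K0 := by
      have : T * ∑ j ∈ J, ‖c j‖ ^ 2 ≤ T * (δ / 2 * S.card) := by gcongr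
      linarith
    rw [inv_mul_le_iff₀ hSc]
    refine h5.trans ?_
    have : 0 ≤ δ / 2 * T := by positivity
    nlinarith

lemma cauchy_sq (f : ℂ → ℂ) (c : ℂ) (r : ℝ) (hr : 0 < r)
    (hf : DifferentiableOn ℂ f (Metric.closedBall c (2 * r))) (s : ℂ) (hs : s ∈ Metric.ball c r) :
    ‖f s‖ ^ 2 ≤ Real.pi⁻¹ * ∫ θ in (0 : ℝ)..(2 * Real.pi), ‖f (circleMap c (2 * r) θ)‖ ^ 2 := by
  have hpi := Real.pi_pos
  have hg : DiffContOnCl ℂ (fun z => f z ^ 2) (Metric.ball c (2 * r)) :=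
    (hf.pow 2).diffContOnCl_ball subset_rfl
  have hs2 : s ∈ Metric.ball c (2 * r) := Metric.ball_subset_ball (by linarith) hs
  have h := hg.two_pi_i_inv_smul_circleIntegral_sub_inv_smul hs2
  have hcm : ∀ θ, circleMap c (2 * r) θ ∈ Metric.closedBall c (2 * r) := fun θ =>
    circleMap_mem_closedBall c (by linarith) θ
  have hfc : Continuous (fun θ => f (circleMap c (2 * r) θ)) :=
    hf.continuousOn.comp_continuous (continuous_circleMap _ _) hcm
  have hdist : ∀ θ, r ≤ ‖circleMap c (2 * r) θ - s‖ := by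
    intro θ
    have h1 : ‖circleMap c (2 * r) θ - c‖ = 2 * r := by
      rw [circleMap_sub_center, norm_circleMap_zero, abs_of_pos (by linarith)]
    have h2 : ‖s - c‖ < r := by simpa [dist_eq_norm] using hs
    have h3 : ‖circleMap c (2 * r) θ - c‖ ≤ ‖circleMap c (2 * r) θ - s‖ + ‖s - c‖ := norm_sub_le_norm_sub_add_norm_sub _ _ _
    linarith
  have hb : ‖∮ (z : ℂ) in C(c, 2 * r), (z - s)⁻¹ • f z ^ 2‖ ≤
      ∫ θ in (0 : ℝ)..(2 * Real.pi), 2 * ‖f (circleMap c (2 * r) θ)‖ ^ 2 := by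
    unfold circleIntegral
    apply intervalIntegral.norm_integral_le_of_norm_le (by positivity)
    · refine ae_of_all _ fun θ _ => ?_
      rw [norm_smul, norm_smul, deriv_circleMap, norm_mul, norm_circleMap_zero, Complex.norm_I, mul_one,
        norm_inv, norm_pow, abs_of_pos (by linarith), ← mul_assoc]
      gcongr
      rw [← div_eq_mul_inv, div_le_iff₀ (by linarith [hdist θ])]
      linarith [hdist θ]
    · exact Continuous.intervalIntegrable (continuous_const.mul (hfc.norm.pow 2)) _ _
  rw [← norm_pow, ← h, norm_smul]
  have hn : ‖((2 : ℂ) * Real.pi * I)⁻¹‖ = (2 * Real.pi)⁻¹ := by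
    rw [norm_inv, norm_mul, norm_mul, Complex.norm_I, Complex.norm_real, Real.norm_of_nonneg hpi.le]
    simp
  rw [hn]
  calc _ ≤ (2 * Real.pi)⁻¹ * ∫ θ in (0 : ℝ)..(2 * Real.pi), 2 * ‖f (circleMap c (2 * r) θ)‖ ^ 2 := by gcongr
    _ = _ := by rw [intervalIntegral.integral_const_mul]; field_simp

lemma zeta_cont_shift (c : ℝ) {X : Type*} [TopologicalSpace X] (g : X → ℂ) (t : X → ℝ) (hg : Continuous g)
    (ht : Continuous t) (h : ∀ x, (g x).re < 1) :
    Continuous (fun x => riemannZeta (g x + (c * t x : ℝ) * I)) := by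
  rw [continuous_iff_continuousAt]
  intro x
  have hne : g x + (c * t x : ℝ) * I ≠ 1 := by
    intro hh
    have := congrArg Complex.re hh
    simp at this; linarith [h x]
  exact ContinuousAt.comp (f := fun x => g x + (c * t x : ℝ) * I)
    (differentiableAt_riemannZeta hne).continuousAt (by fun_prop)

lemma weighted_mean (d : ℝ) (hd0 : d ≠ 0) (hd1 : d ≠ 1)
    (gs : ∀ p q : ℚ, 0 < p → 0 < q → (d - 1) * Real.log p = Real.log q → p = 1)
    (a b B0 : ℝ) (ha : 1 / 2 < a) (hb : b < 1) (δ : ℝ) (hδ : 0 < δ) :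
    ∃ (W : ℝ → ℝ) (B : ℝ), Continuous W ∧ (∀ t, 0 ≤ W t) ∧ 0 < B ∧ (∀ t, W t ≤ B) ∧
      ∃ T0 : ℝ, ∀ T ≥ T0, T / 2 ≤ (∫ t in (0 : ℝ)..T, W t) ∧
        ∀ z : ℂ, a ≤ z.re → z.re ≤ b → |z.im| ≤ B0 →
        ∫ t in (0 : ℝ)..T, W t * ‖riemannZeta (z + (d * t : ℝ) * I) - riemannZeta (z + t * I)‖ ^ 2 ≤ δ * T := by
  obtain ⟨W, B, hWc, hW0, hB, hWB, ⟨T1, hT1⟩, hX⟩ := weight_exists d hd1 gs a ha (δ / 9) (by positivity)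
  refine ⟨W, B, hWc, hW0, hB, hWB, ?_⟩
  obtain ⟨M1, hM1⟩ := zeta_approx_shift a b B0 d ha hb hd0 (δ / (9 * B)) (by positivity)
  obtain ⟨M2, hM2⟩ := zeta_approx_shift a b B0 1 ha hb one_ne_zero (δ / (9 * B)) (by positivity)
  set M := max M1 M2 with hM
  obtain ⟨T2, hT2⟩ := hM1 M (le_max_left _ _)
  obtain ⟨T3, hT3⟩ := hM2 M (le_max_right _ _)
  obtain ⟨T4, hT4⟩ := hX M
  refine ⟨max (max T1 T2) (max (max T3 T4) 0), fun T hT => ?_⟩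
  simp only [ge_iff_le, max_le_iff] at hT
  obtain ⟨⟨hTa, hTb⟩, ⟨hTc, hTd⟩, hT0⟩ := hT
  refine ⟨hT1 T hTa, fun z hz1 hz2 hz3 => ?_⟩
  have h2 := hT2 T hTb z hz1 hz2 hz3
  have h3 := hT3 T hTc z hz1 hz2 hz3
  have h4 := hT4 T hTd z hz1
  simp only [one_mul] at h3
  have zc : ∀ c : ℝ, Continuous (fun t : ℝ => riemannZeta (z + (c * t : ℝ) * I)) := fun c =>
    zeta_cont_shift c (fun _ => z) (fun t => t) continuous_const continuous_id (fun _ => by linarith)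
  have zc1 : Continuous (fun t : ℝ => riemannZeta (z + t * I)) := by simpa using zc 1
  have xc : Continuous (fun t : ℝ => XM M (z + (d * t : ℝ) * I)) := (XM_diff M).continuous.comp (by fun_prop)
  have xc1 : Continuous (fun t : ℝ => XM M (z + t * I)) := (XM_diff M).continuous.comp (by fun_prop)
  have zcd := zc d
  set p : ℝ → ℂ := fun t => riemannZeta (z + (d * t : ℝ) * I) with hp
  set q : ℝ → ℂ := fun t => riemannZeta (z + t * I) with hq
  set u : ℝ → ℂ := fun t => XM M (z + (d * t : ℝ) * I) with hu
  set v : ℝ → ℂ := fun t => XM M (z + t * I) with hv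
  have i1 : IntervalIntegrable (fun t => B * ‖p t - u t‖ ^ 2) volume 0 T := Continuous.intervalIntegrable (by fun_prop) _ _
  have i2 : IntervalIntegrable (fun t => B * ‖q t - v t‖ ^ 2) volume 0 T := Continuous.intervalIntegrable (by fun_prop) _ _
  have i3 : IntervalIntegrable (fun t => W t * ‖v t - u t‖ ^ 2) volume 0 T := Continuous.intervalIntegrable (by fun_prop) _ _
  have hpt : ∀ t, W t * ‖p t - q t‖ ^ 2 ≤ 3 * (B * ‖p t - u t‖ ^ 2 + B * ‖q t - v t‖ ^ 2 + W t * ‖v t - u t‖ ^ 2) := by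
    intro t
    have h1 : ‖p t - q t‖ ≤ ‖p t - u t‖ + ‖q t - v t‖ + ‖v t - u t‖ := by
      have : p t - q t = (p t - u t) - (q t - v t) - (v t - u t) := by ring
      rw [this]
      exact (norm_sub_le _ _).trans (by gcongr; exact norm_sub_le _ _)
    have h2 : ‖p t - q t‖ ^ 2 ≤ 3 * (‖p t - u t‖ ^ 2 + ‖q t - v t‖ ^ 2 + ‖v t - u t‖ ^ 2) := by
      have : ‖p t - q t‖ ^ 2 ≤ (‖p t - u t‖ + ‖q t - v t‖ + ‖v t - u t‖) ^ 2 := by gcongr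
      nlinarith [sq_nonneg (‖p t - u t‖ - ‖q t - v t‖), sq_nonneg (‖p t - u t‖ - ‖v t - u t‖), sq_nonneg (‖q t - v t‖ - ‖v t - u t‖)]
    have e1 : W t * ‖p t - u t‖ ^ 2 ≤ B * ‖p t - u t‖ ^ 2 := by gcongr; exact hWB t
    have e2 : W t * ‖q t - v t‖ ^ 2 ≤ B * ‖q t - v t‖ ^ 2 := by gcongr; exact hWB t
    have e3 := mul_le_mul_of_nonneg_left h2 (hW0 t)
    linarith
  calc _ ≤ ∫ t in (0 : ℝ)..T, 3 * (B * ‖p t - u t‖ ^ 2 + B * ‖q t - v t‖ ^ 2 + W t * ‖v t - u t‖ ^ 2) := by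
        apply intervalIntegral.integral_mono_on hT0
        · exact Continuous.intervalIntegrable (hWc.mul ((zcd.sub zc1).norm.pow 2)) _ _
        · exact Continuous.intervalIntegrable (by fun_prop) _ _
        · intro t _; exact hpt t
    _ = 3 * (B * (∫ t in (0 : ℝ)..T, ‖p t - u t‖ ^ 2) + B * (∫ t in (0 : ℝ)..T, ‖q t - v t‖ ^ 2) +
          ∫ t in (0 : ℝ)..T, W t * ‖v t - u t‖ ^ 2) := by
        rw [intervalIntegral.integral_const_mul, intervalIntegral.integral_add (i1.add i2) i3,
          intervalIntegral.integral_add i1 i2, intervalIntegral.integral_const_mul, intervalIntegral.integral_const_mul]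
    _ ≤ 3 * (B * (δ / (9 * B) * T) + B * (δ / (9 * B) * T) + δ / 9 * T) := by gcongr
    _ = _ := by field_simp; ring

lemma lowerDens_pos (S G : Set ℝ) (hGS : G ⊆ S) (κ : ℝ) (hκ : 0 < κ) (T0 : ℝ)
    (h : ∀ T ≥ T0, κ * T ≤ (volume (G ∩ Set.Ioc 0 T)).toReal) : 0 < lowerDens S := by
  refine lt_of_lt_of_le hκ ?_
  unfold lowerDens
  have hle : ∀ T : ℝ, volume (S ∩ Set.Icc 0 T) ≤ ENNReal.ofReal T := by
    intro T
    refine (measure_mono Set.inter_subset_right).trans ?_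
    rw [Real.volume_Icc, sub_zero]
  apply le_liminf_of_le
  · apply IsBoundedUnder.isCoboundedUnder_ge
    refine ⟨1, ?_⟩
    rw [eventually_map]
    filter_upwards [eventually_gt_atTop 0] with T hT
    rw [div_le_one hT]
    exact ENNReal.toReal_le_of_le_ofReal hT.le (hle T)
  · filter_upwards [eventually_gt_atTop 0, eventually_ge_atTop T0] with T hT hT2
    rw [le_div_iff₀ hT]
    refine (h T hT2).trans ?_
    apply ENNReal.toReal_mono
    · exact ((hle T).trans_lt ENNReal.ofReal_lt_top).ne
    · exact measure_mono (Set.inter_subset_inter hGS Set.Ioc_subset_Icc_self)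

lemma main_of_gs (d : ℝ) (hd0 : d ≠ 0) (hd1 : d ≠ 1)
    (gs : ∀ p q : ℚ, 0 < p → 0 < q → (d - 1) * Real.log p = Real.log q → p = 1)
    (K : Set ℂ) (hK : IsCompact K) (hKD : K ⊆ strip) (ε : ℝ) (hε : 0 < ε) :
    0 < lowerDens {τ : ℝ |
      supNorm K (fun s => riemannZeta (s + (d * τ : ℝ) * Complex.I)
        - riemannZeta (s + τ * Complex.I)) < ENNReal.ofReal ε} := by
  have hpi := Real.pi_pos
  have hso : IsOpen strip := by
    have : strip = Complex.re ⁻¹' Set.Ioo (1 / 2) 1 := by ext; simp [strip]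
    rw [this]; exact isOpen_Ioo.preimage Complex.continuous_re
  obtain ⟨R, hR, hRs⟩ := hK.exists_cthickening_subset_open hso hKD
  set r := R / 2 with hr
  have hr0 : 0 < r := by positivity
  have hR2 : 2 * r = R := by rw [hr]; ring
  set K2 := Metric.cthickening R K with hK2
  have hK2c : IsCompact K2 := hK.cthickening
  obtain ⟨a, b, B0, ha, hb, hab⟩ : ∃ a b B0 : ℝ, 1 / 2 < a ∧ b < 1 ∧ ∀ z ∈ K2, a ≤ z.re ∧ z.re ≤ b ∧ |z.im| ≤ B0 := by
    rcases K2.eq_empty_or_nonempty with he | hne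
    · exact ⟨3 / 4, 3 / 4, 0, by norm_num, by norm_num, by simp [he]⟩
    · obtain ⟨x, hx, hx2⟩ := hK2c.exists_isMinOn hne Complex.continuous_re.continuousOn
      obtain ⟨y, hy, hy2⟩ := hK2c.exists_isMaxOn hne Complex.continuous_re.continuousOn
      obtain ⟨w, hw, hw2⟩ := hK2c.exists_isMaxOn hne (Complex.continuous_im.abs).continuousOn
      exact ⟨x.re, y.re, |w.im|, (hRs hx).1, (hRs hy).2, fun z hz => ⟨hx2 hz, hy2 hz, hw2 hz⟩⟩
  obtain ⟨t, htK, htf, hcov⟩ := hK.finite_cover_balls hr0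
  lift t to Finset ℂ using htf
  set e0 : ℝ := Real.pi * (ε / 2) ^ 2 with he0
  have he00 : 0 < e0 := by positivity
  set δ : ℝ := e0 / (8 * Real.pi * (t.card + 1)) with hδ
  have hδ0 : 0 < δ := by positivity
  obtain ⟨W, B, hWc, hW0, hB, hWB, T0, hT0⟩ := weighted_mean d hd0 hd1 gs a b B0 ha hb δ hδ0
  set f : ℝ → ℂ → ℂ := fun τ s => riemannZeta (s + (d * τ : ℝ) * I) - riemannZeta (s + τ * I) with hf
  have hcirc : ∀ c ∈ t, ∀ θ, circleMap c (2 * r) θ ∈ K2 := by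
    intro c hc θ
    exact Metric.closedBall_subset_cthickening (htK hc) R
      (hR2 ▸ circleMap_mem_closedBall c (by linarith) θ)
  have hjc : ∀ c ∈ t, Continuous (Function.uncurry fun (τ θ : ℝ) => ‖f τ (circleMap c (2 * r) θ)‖ ^ 2) := by
    intro c hc
    have h1 : ∀ e : ℝ, Continuous (fun x : ℝ × ℝ => riemannZeta (circleMap c (2 * r) x.2 + (e * x.1 : ℝ) * I)) := fun e =>
      zeta_cont_shift e (fun x : ℝ × ℝ => circleMap c (2 * r) x.2) (fun x => x.1)
        ((continuous_circleMap _ _).comp continuous_snd) continuous_fst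
        (fun x => lt_of_le_of_lt (hab _ (hcirc c hc x.2)).2.1 hb)
    have h2 : Continuous (fun x : ℝ × ℝ => riemannZeta (circleMap c (2 * r) x.2 + x.1 * I)) := by
      simpa using h1 1
    exact (((h1 d).sub h2).norm.pow 2)
  set J : ℝ → ℝ := fun τ => ∑ c ∈ t, ∫ θ in (0 : ℝ)..(2 * Real.pi), ‖f τ (circleMap c (2 * r) θ)‖ ^ 2 with hJ
  have hJc : Continuous J := by
    apply continuous_finsetSum
    intro c hc
    exact intervalIntegral.continuous_parametric_intervalIntegral_of_continuous' (hjc c hc) _ _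
  have hJ0 : ∀ τ, 0 ≤ J τ := fun τ => Finset.sum_nonneg fun c _ =>
    intervalIntegral.integral_nonneg (by positivity) fun _ _ => by positivity
  set G : Set ℝ := {τ | J τ < e0} with hG
  have hGm : MeasurableSet G := (isOpen_lt hJc continuous_const).measurableSet
  apply lowerDens_pos _ G _ (1 / (4 * B)) (by positivity) (max T0 0)
  · intro T hT
    have hTT0 : T0 ≤ T := (le_max_left _ _).trans hT
    have hTn : 0 ≤ T := (le_max_right _ _).trans hT
    obtain ⟨hm1, hm2⟩ := hT0 T hTT0
    have hWJ : ∫ τ in (0 : ℝ)..T, W τ * J τ ≤ e0 / 4 * T := by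
      have s1 : ∀ c ∈ t, ∫ τ in (0 : ℝ)..T, W τ * (∫ θ in (0 : ℝ)..(2 * Real.pi), ‖f τ (circleMap c (2 * r) θ)‖ ^ 2) ≤
          2 * Real.pi * (δ * T) := by
        intro c hc
        have hcc := hjc c hc
        have hunc : Continuous (Function.uncurry fun (τ θ : ℝ) => W τ * ‖f τ (circleMap c (2 * r) θ)‖ ^ 2) :=
          (hWc.comp continuous_fst).mul hcc
        calc _ = ∫ τ in (0 : ℝ)..T, (∫ θ in (0 : ℝ)..(2 * Real.pi), W τ * ‖f τ (circleMap c (2 * r) θ)‖ ^ 2) := by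
              simp only [intervalIntegral.integral_const_mul]
          _ = ∫ θ in (0 : ℝ)..(2 * Real.pi), (∫ τ in (0 : ℝ)..T, W τ * ‖f τ (circleMap c (2 * r) θ)‖ ^ 2) := by
              apply intervalIntegral_intervalIntegral_swap
              apply IntegrableOn.mono_set (t := Set.uIcc 0 T ×ˢ Set.uIcc 0 (2 * Real.pi))
              · exact hunc.continuousOn.integrableOn_compact (isCompact_uIcc.prod isCompact_uIcc)
              · exact Set.prod_mono Set.uIoc_subset_uIcc Set.uIoc_subset_uIcc
          _ ≤ ∫ θ in (0 : ℝ)..(2 * Real.pi), δ * T := by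
              apply intervalIntegral.integral_mono_on (by positivity)
              · apply Continuous.intervalIntegrable
                apply intervalIntegral.continuous_parametric_intervalIntegral_of_continuous'
                exact hunc.comp continuous_swap
              · exact continuous_const.intervalIntegrable _ _
              · intro θ _
                obtain ⟨z1, z2, z3⟩ := hab _ (hcirc c hc θ)
                exact hm2 _ z1 z2 z3
          _ = _ := by rw [intervalIntegral.integral_const, smul_eq_mul, sub_zero]
      have s2 : ∫ τ in (0 : ℝ)..T, W τ * J τ = ∑ c ∈ t, ∫ τ in (0 : ℝ)..T, W τ * (∫ θ in (0 : ℝ)..(2 * Real.pi), ‖f τ (circleMap c (2 * r) θ)‖ ^ 2) := by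
        simp only [hJ, Finset.mul_sum]
        rw [intervalIntegral.integral_finsetSum]
        intro c hc
        exact Continuous.intervalIntegrable (hWc.mul (intervalIntegral.continuous_parametric_intervalIntegral_of_continuous' (hjc c hc) _ _)) _ _
      rw [s2]
      refine (Finset.sum_le_sum s1).trans ?_
      rw [Finset.sum_const, nsmul_eq_mul, hδ]
      have : (t.card : ℝ) * (2 * Real.pi * (e0 / (8 * Real.pi * (t.card + 1)) * T)) = (t.card / (t.card + 1)) * (e0 / 4 * T) := by
        field_simp; ring
      rw [this]
      have h1 : (t.card : ℝ) / (t.card + 1) ≤ 1 := by rw [div_le_one (by positivity)]; linarith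
      have h2 : 0 ≤ e0 / 4 * T := by positivity
      nlinarith
    have hind : IntervalIntegrable (fun τ => G.indicator (fun _ => (1 : ℝ)) τ) volume 0 T := by
      rw [intervalIntegrable_iff, Set.uIoc_of_le hTn]
      exact (integrable_const (1 : ℝ)).indicator hGm
    have hindv : ∫ τ in (0 : ℝ)..T, G.indicator (fun _ => (1 : ℝ)) τ = (volume (G ∩ Set.Ioc 0 T)).toReal := by
      rw [intervalIntegral.integral_of_le hTn, integral_indicator hGm, Measure.restrict_restrict hGm]
      simp [Measure.real]
    have hfin : ∫ t in (0 : ℝ)..T, W t ≤ ∫ τ in (0 : ℝ)..T, (e0⁻¹ * (W τ * J τ) + B * G.indicator (fun _ => (1 : ℝ)) τ) := by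
      apply intervalIntegral.integral_mono_on hTn
      · exact hWc.intervalIntegrable _ _
      · exact (Continuous.intervalIntegrable (by fun_prop) _ _).add (hind.const_mul B)
      · intro τ _
        by_cases hτ : τ ∈ G
        · rw [Set.indicator_of_mem hτ]
          have : 0 ≤ e0⁻¹ * (W τ * J τ) := by have := hW0 τ; have := hJ0 τ; positivity
          linarith [hWB τ]
        · rw [Set.indicator_of_notMem hτ]
          have h1 : e0 ≤ J τ := by simpa [hG] using hτ
          have h2 : W τ = e0⁻¹ * (W τ * e0) := by field_simp
          have h3 : e0⁻¹ * (W τ * e0) ≤ e0⁻¹ * (W τ * J τ) := by have := hW0 τ; gcongr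
          linarith
    rw [intervalIntegral.integral_add (Continuous.intervalIntegrable (by fun_prop) _ _) (hind.const_mul B),
      intervalIntegral.integral_const_mul, intervalIntegral.integral_const_mul, hindv] at hfin
    have h5 : e0⁻¹ * ∫ τ in (0 : ℝ)..T, W τ * J τ ≤ T / 4 := by
      rw [inv_mul_le_iff₀ he00]; linarith
    rw [one_div, mul_comm, ← div_eq_mul_inv, div_le_iff₀ (by positivity)]
    linarith
  · intro τ hτ
    have hτ' : J τ < e0 := hτ
    show supNorm K (f τ) < ENNReal.ofReal ε
    refine lt_of_le_of_lt (b := ENNReal.ofReal (ε / 2)) ?_ ((ENNReal.ofReal_lt_ofReal_iff hε).2 (by linarith))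
    unfold supNorm
    apply iSup₂_le
    intro s hs
    have hs' := hcov hs
    simp only [Set.mem_iUnion] at hs'
    obtain ⟨c, hc, hsc⟩ := hs'
    have hfd : DifferentiableOn ℂ (f τ) (Metric.closedBall c (2 * r)) := by
      intro z hz
      have hzK : z ∈ K2 := Metric.closedBall_subset_cthickening (htK hc) R (hR2 ▸ hz)
      have hz1 := (hab z hzK).2.1
      have hd : ∀ y : ℝ, DifferentiableAt ℂ (fun z => riemannZeta (z + y * I)) z := by
        intro y
        have hne : z + y * I ≠ 1 := by
          intro hh
          have := congrArg Complex.re hh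
          simp at this; linarith
        exact DifferentiableAt.comp (f := fun z => z + y * I) z (differentiableAt_riemannZeta hne) (by fun_prop)
      exact ((hd (d * τ)).sub (hd τ)).differentiableWithinAt
    have h1 := cauchy_sq (f τ) c r hr0 hfd s hsc
    have h2 : ∫ θ in (0 : ℝ)..(2 * Real.pi), ‖f τ (circleMap c (2 * r) θ)‖ ^ 2 ≤ J τ :=
      Finset.single_le_sum (f := fun c => ∫ θ in (0 : ℝ)..(2 * Real.pi), ‖f τ (circleMap c (2 * r) θ)‖ ^ 2)
        (fun c _ => intervalIntegral.integral_nonneg (by positivity) fun _ _ => by positivity) hc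
    have h3 : ‖f τ s‖ ^ 2 ≤ (ε / 2) ^ 2 := by
      refine h1.trans ?_
      rw [inv_mul_le_iff₀ hpi]
      linarith
    have h4 : ‖f τ s‖ ≤ ε / 2 := by
      exact (sq_le_sq₀ (norm_nonneg _) (by positivity)).1 h3
    rw [← enorm_eq_nnnorm, ← ofReal_norm]
    exact ENNReal.ofReal_le_ofReal h4

theorem gs_factor (F : ℂ → ℂ) (hF : Differentiable ℂ F) (Z : Finset ℂ) (hZ : ∀ z ∈ Z, F z = 0) :
    ∃ G : ℂ → ℂ, Differentiable ℂ G ∧ ∀ z, F z = (∏ w ∈ Z, (z - w)) * G z := by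
  classical
  induction Z using Finset.induction_on with
  | empty => exact ⟨F, hF, by simp⟩
  | insert a Z ha ih =>
    obtain ⟨G, hG, hFG⟩ := ih (fun z hz => hZ z (Finset.mem_insert_of_mem hz))
    have h0 : G a = 0 := by
      have h1 := hZ a (Finset.mem_insert_self _ _)
      rw [hFG a] at h1
      rcases mul_eq_zero.1 h1 with h | h
      · rw [Finset.prod_eq_zero_iff] at h
        obtain ⟨w, hw, h⟩ := h
        rw [sub_eq_zero] at h
        exact absurd (h ▸ hw) ha
      · exact h
    refine ⟨dslope G a, ?_, ?_⟩
    · rw [← differentiableOn_univ] at hG ⊢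
      exact (Complex.differentiableOn_dslope Filter.univ_mem).2 hG
    · intro z
      rw [Finset.prod_insert ha, hFG z]
      have := sub_smul_dslope G a z
      rw [h0, sub_zero, smul_eq_mul] at this
      rw [← this]; ring

theorem gs_maxmod (F : ℂ → ℂ) (hF : Differentiable ℂ F) (Z : Finset ℂ) (hZ : ∀ z ∈ Z, F z = 0)
    (X M : ℝ) (hX : 0 < X) (hZX : ∀ z ∈ Z, ‖z‖ ≤ X) (hM : ∀ z, ‖z‖ = 5 * X → ‖F z‖ ≤ M)
    (x : ℂ) (hx : ‖x‖ ≤ X) : ‖F x‖ * 2 ^ Z.card ≤ M := by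
  obtain ⟨G, hG, hFG⟩ := gs_factor F hF Z hZ
  have hM0 : 0 ≤ M := (norm_nonneg _).trans (hM ((5 * X : ℝ) : ℂ) (by
    rw [Complex.norm_real, Real.norm_eq_abs, abs_of_pos (by positivity)]))
  have hGb : ‖G x‖ ≤ M / (4 * X) ^ Z.card := by
    refine Complex.norm_le_of_forall_mem_frontier_norm_le (U := Metric.ball 0 (5 * X)) Metric.isBounded_ball
      hG.diffContOnCl ?_ ?_
    · intro z hz
      rw [frontier_ball _ (by positivity), mem_sphere_zero_iff_norm] at hz
      have h1 := hM z hz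
      rw [hFG z, norm_mul, norm_prod] at h1
      rw [le_div_iff₀ (by positivity)]
      refine le_trans ?_ h1
      rw [mul_comm]
      gcongr
      rw [← Finset.prod_const]
      apply Finset.prod_le_prod
      · intros; positivity
      · intro w hw
        have := norm_sub_norm_le z w
        have := hZX w hw
        linarith
    · apply subset_closure
      rw [mem_ball_zero_iff]; linarith
  rw [hFG x, norm_mul, norm_prod]
  have h2 : ∏ w ∈ Z, ‖x - w‖ ≤ (2 * X) ^ Z.card := by
    rw [← Finset.prod_const]
    apply Finset.prod_le_prod
    · intros; positivity
    · intro w hw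
      have := norm_sub_le x w
      have := hZX w hw
      linarith
  calc _ ≤ (2 * X) ^ Z.card * (M / (4 * X) ^ Z.card) * 2 ^ Z.card := by gcongr
    _ = M := by
      rw [show (4 * X) = 2 * X * 2 by ring, mul_pow (2 * X) 2]
      field_simp

theorem gs_rolle (f f' : ℝ → ℝ) (hf : ∀ x, HasDerivAt f (f' x) x) (n : ℕ)
    (h : ∃ u : Fin (n + 1) → ℝ, StrictMono u ∧ ∀ i, f (u i) = 0) :
    ∃ u : Fin n → ℝ, StrictMono u ∧ ∀ i, f' (u i) = 0 := by
  obtain ⟨u, hu, h0⟩ := h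
  have : ∀ i : Fin n, ∃ c ∈ Set.Ioo (u i.castSucc) (u i.succ), f' c = 0 := fun i =>
    exists_hasDerivAt_eq_zero (hu (Fin.castSucc_lt_succ))
      (fun x _ => (hf x).continuousAt.continuousWithinAt) (by rw [h0, h0]) (fun x _ => hf x)
  choose v hv hv0 using this
  refine ⟨v, ?_, hv0⟩
  intro i j hij
  refine (hv i).2.trans_le (le_trans (hu.monotone ?_) (hv j).1.le)
  rw [Fin.le_def]; simp; exact hij

theorem gs_rolle_iter (g : ℕ → ℝ → ℝ) (hg : ∀ k x, HasDerivAt (g k) (g (k + 1) x) x) (k n : ℕ)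
    (h : ∃ u : Fin (n + k) → ℝ, StrictMono u ∧ ∀ i, g 0 (u i) = 0) :
    ∃ u : Fin n → ℝ, StrictMono u ∧ ∀ i, g k (u i) = 0 := by
  induction k generalizing n with
  | zero => exact h
  | succ k ih =>
    apply gs_rolle (g k) (g (k + 1)) (hg k)
    apply ih
    rw [show n + 1 + k = n + (k + 1) by ring]
    exact h

open Polynomial in
theorem gs_T_inj (c : ℝ) (hc : c ≠ 0) (k : ℕ) (P : ℝ[X])
    (h : (fun Q : ℝ[X] => derivative Q + C c * Q)^[k] P = 0) : P = 0 := by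
  induction k generalizing P with
  | zero => exact h
  | succ k ih =>
    rw [Function.iterate_succ_apply] at h
    have h1 := ih _ h
    by_contra hP
    have h2 := degree_derivative_lt hP
    have h3 : derivative P = - (C c * P) := eq_neg_of_add_eq_zero_left h1
    rw [h3, degree_neg, degree_C_mul hc] at h2
    exact lt_irrefl _ h2

open Polynomial in
theorem gs_zero_est (l : ℝ) (hl : l ≠ 0) (L : ℕ) (N : ℕ) : ∀ (P : ℕ → ℝ[X]),
    (∀ j < N, (P j).degree < L) →
    (∃ u : Fin (L * N) → ℝ, StrictMono u ∧
      ∀ i, ∑ j ∈ Finset.range N, (P j).eval (u i) * Real.exp (j * l * u i) = 0) →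
    ∀ j < N, P j = 0 := by
  induction N with
  | zero => intro P _ _ j hj; omega
  | succ N ih =>
    intro P hP hu
    obtain ⟨u, hu, hu0⟩ := hu
    set T : ℕ → ℝ[X] → ℝ[X] := fun j Q => derivative Q + C (j * l) * Q with hT
    have hTdeg : ∀ j k (Q : ℝ[X]), Q.degree < L → ((T j)^[k] Q).degree < L := by
      intro j k
      induction k with
      | zero => intro Q hQ; exact hQ
      | succ k ihk =>
        intro Q hQ
        rw [Function.iterate_succ_apply]
        apply ihk
        refine (degree_add_le _ _).trans_lt (max_lt ?_ ?_)
        · exact (degree_derivative_le).trans_lt hQ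
        · refine lt_of_le_of_lt ?_ hQ
          rw [← smul_eq_C_mul]
          exact degree_smul_le _ _
    have key := gs_rolle_iter
      (fun k x => ∑ j ∈ Finset.range (N + 1), ((T j)^[k] (P j)).eval x * Real.exp (j * l * x))
      (by
        intro k x
        apply HasDerivAt.fun_sum
        intro j _
        have h1 := (((T j)^[k] (P j)).hasDerivAt x).mul
          (((hasDerivAt_id x).const_mul ((j : ℝ) * l)).exp)
        refine h1.congr_deriv ?_
        rw [Function.iterate_succ_apply']
        simp [hT]; ring) L (L * N) ⟨u, hu, hu0⟩
    obtain ⟨v, hv, hv0⟩ := key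
    have hz0 : (T 0)^[L] (P 0) = 0 := by
      have : T 0 = fun Q => derivative Q := by ext Q; simp [hT]
      rw [this]
      exact iterate_derivative_eq_zero_of_degree_lt (hP 0 (by omega))
    have hrest := ih (fun j => (T (j + 1))^[L] (P (j + 1)))
      (fun j hj => hTdeg _ _ _ (hP _ (by omega))) ⟨v, hv, by
        intro i
        have h1 := hv0 i
        rw [Finset.sum_range_succ', hz0] at h1
        simp only [eval_zero, zero_mul, add_zero] at h1
        have h2 : ∑ j ∈ Finset.range N, eval (v i) ((T (j + 1))^[L] (P (j + 1))) * Real.exp (((j + 1 : ℕ) : ℝ) * l * v i)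
          = Real.exp (l * v i) * ∑ j ∈ Finset.range N, eval (v i) ((T (j + 1))^[L] (P (j + 1))) * Real.exp (j * l * v i) := by
          rw [Finset.mul_sum]
          apply Finset.sum_congr rfl
          intro j _
          rw [show ((j + 1 : ℕ) : ℝ) * l * v i = l * v i + j * l * v i by push_cast; ring, Real.exp_add]
          ring
        rw [h2] at h1
        exact (mul_eq_zero.1 h1).resolve_left (Real.exp_ne_zero _)⟩
    have hsucc : ∀ j < N, P (j + 1) = 0 := fun j hj =>
      gs_T_inj (((j + 1 : ℕ) : ℝ) * l) (mul_ne_zero (by positivity) hl) L _ (hrest j hj)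
    have hP0 : P 0 = 0 := by
      apply eq_zero_of_degree_lt_of_eval_index_eq_zero (s := (Finset.univ : Finset (Fin (L * (N + 1))))) (v := u)
        hu.injective.injOn
      · refine (hP 0 (by omega)).trans_le ?_
        simp only [Finset.card_univ, Fintype.card_fin]
        exact_mod_cast Nat.le_mul_of_pos_right L (by omega)
      · intro i _
        have h1 := hu0 i
        rw [Finset.sum_range_succ', Finset.sum_eq_zero] at h1
        · simpa using h1
        · intro j hj
          rw [hsucc j (Finset.mem_range.1 hj)]; simp
    intro j hj
    cases j with
    | zero => exact hP0
    | succ j => exact hsucc j (by omega)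

theorem gs_siegel (K : Type) [Field K] [NumberField K] : ∃ C : ℝ, 1 ≤ C ∧
    ∀ (α β : Type) [Fintype α] [Fintype β] (a : Matrix α β (NumberField.RingOfIntegers K)) (A : ℝ),
      a ≠ 0 → 0 < Fintype.card α → Fintype.card β = 2 * Fintype.card α →
      (∀ k l, NumberField.house (a k l : K) ≤ A) →
      ∃ ξ : β → NumberField.RingOfIntegers K, ξ ≠ 0 ∧ a.mulVec ξ = 0 ∧
        ∀ l, NumberField.house (ξ l : K) ≤ C * (C * Fintype.card β * A) := by
  classical
  obtain ⟨c, hc⟩ : ∃ c : ℝ, ∀ (α β : Type) [Fintype α] [Fintype β] (a : Matrix α β (NumberField.RingOfIntegers K)) (A : ℝ),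
      a ≠ 0 → 0 < Fintype.card α → Fintype.card α < Fintype.card β →
      (∀ k l, NumberField.house (algebraMap (NumberField.RingOfIntegers K) K (a k l)) ≤ A) →
      ∃ ξ : β → NumberField.RingOfIntegers K, ξ ≠ 0 ∧ a.mulVec ξ = 0 ∧
        ∀ l, NumberField.house (ξ l : K) ≤
          c * ((c * (Fintype.card β : ℕ) * A) ^ (((Fintype.card α : ℕ) : ℝ) / ((Fintype.card β : ℕ) - (Fintype.card α : ℕ)))) :=
    ⟨_, fun α β _ _ a A ha h0 hc hA =>
      NumberField.house.exists_ne_zero_int_vec_house_le K a ha h0 hc rfl hA rfl⟩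
  refine ⟨max 1 |c|, le_max_left _ _, ?_⟩
  intro α β _ _ a A ha h0 hcard hA
  have hA0 : 0 ≤ A := by
    obtain ⟨k⟩ := Fintype.card_pos_iff.1 h0
    obtain ⟨l⟩ := Fintype.card_pos_iff.1 (show 0 < Fintype.card β by omega)
    exact (NumberField.house_nonneg _).trans (hA k l)
  obtain ⟨ξ, h1, h2, h3⟩ := hc α β a A ha h0 (by omega) hA
  refine ⟨ξ, h1, h2, fun l => (h3 l).trans ?_⟩
  have he : ((Fintype.card α : ℕ) : ℝ) / ((Fintype.card β : ℕ) - (Fintype.card α : ℕ)) = 1 := by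
    have : (0:ℝ) < Fintype.card α := by exact_mod_cast h0
    rw [hcard]; push_cast
    rw [div_eq_one_iff_eq]
    · ring
    · linarith
  rw [he, Real.rpow_one]
  have h4 : c * c ≤ max 1 |c| * max 1 |c| := by
    rw [← abs_mul_abs_self c]
    gcongr <;> exact le_max_right _ _
  have h5 : 0 ≤ (Fintype.card β : ℝ) * A := by positivity
  nlinarith

theorem gs_liouville (K : Type) [Field K] [NumberField K] (σ : K →+* ℂ) (x : K) (hx : IsIntegral ℤ x)
    (h0 : x ≠ 0) : 1 ≤ ‖σ x‖ * NumberField.house x ^ (Module.finrank ℚ K - 1) := by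
  refine le_trans ?_ (NumberField.norm_norm_le_norm_mul_house_pow x σ)
  have h1 : IsIntegral ℤ (Algebra.norm ℚ x) := Algebra.isIntegral_norm ℚ hx
  obtain ⟨z, hz⟩ := IsIntegrallyClosed.isIntegral_iff.1 h1
  have h2 : Algebra.norm ℚ x ≠ 0 := Algebra.norm_ne_zero_iff.2 h0
  rw [← hz] at h2 ⊢
  have hz0 : z ≠ 0 := by rintro rfl; simp at h2
  simp only [eq_intCast, Int.norm_cast_rat, Int.norm_eq_abs]
  exact_mod_cast Int.one_le_abs hz0

theorem gs_denom (K : Type) [Field K] [NumberField K] (b : K) (p q : ℚ) :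
    ∃ D : ℕ, 0 < D ∧ IsIntegral ℤ ((D : K) * b) ∧ IsIntegral ℤ ((D : K) * p) ∧ IsIntegral ℤ ((D : K) * q) := by
  have key : ∀ x : K, ∃ D : ℕ, 0 < D ∧ IsIntegral ℤ ((D : K) * x) := by
    intro x
    obtain ⟨y, hy, h⟩ := IsAlgebraic.exists_integral_multiple (R := ℤ) (z := x)
      ((IsFractionRing.isAlgebraic_iff ℤ ℚ K).2 (Algebra.IsAlgebraic.isAlgebraic x))
    refine ⟨y.natAbs, Int.natAbs_pos.2 hy, ?_⟩
    rw [zsmul_eq_mul] at h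
    rcases Int.natAbs_eq y with h' | h'
    · rw [h'] at h
      simpa using h
    · rw [h'] at h
      simpa using h.neg
  obtain ⟨D1, h1, i1⟩ := key b
  obtain ⟨D2, h2, i2⟩ := key p
  obtain ⟨D3, h3, i3⟩ := key q
  have hn : ∀ n : ℕ, IsIntegral ℤ (n : K) := fun n => by
    simpa using (isIntegral_algebraMap (R := ℤ) (A := K) (x := (n : ℤ)))
  refine ⟨D1 * D2 * D3, by positivity, ?_, ?_, ?_⟩ <;> push_cast
  · rw [show (D1 * D2 * D3 * b : K) = D2 * D3 * (D1 * b) by ring]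
    exact ((hn _).mul (hn _)).mul i1
  · rw [show (D1 * D2 * D3 * p : K) = D1 * D3 * (D2 * p) by ring]
    exact ((hn _).mul (hn _)).mul i2
  · rw [show (D1 * D2 * D3 * q : K) = D1 * D2 * (D3 * q) by ring]
    exact ((hn _).mul (hn _)).mul i3

theorem gs_int_pow (K : Type) [Field K] [NumberField K] (D : ℕ) (x : K) (hx : IsIntegral ℤ ((D : K) * x))
    (i L : ℕ) (h : i ≤ L) : IsIntegral ℤ ((D : K) ^ L * x ^ i) := by
  have hn : IsIntegral ℤ (D : K) := by
    simpa using (isIntegral_algebraMap (R := ℤ) (A := K) (x := (D : ℤ)))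
  obtain ⟨k, rfl⟩ := Nat.exists_eq_add_of_le h
  rw [show (D : K) ^ (i + k) * x ^ i = D ^ k * (D * x) ^ i by rw [pow_add, mul_pow]; ring]
  exact (hn.pow _).mul (hx.pow _)

theorem gs_inj (β : ℝ) (hβ : Irrational β) (a b a' b' : ℕ) (h : (a : ℝ) + b * β = a' + b' * β) :
    a = a' ∧ b = b' := by
  have hb : b = b' := by
    by_contra hne
    apply hβ
    have h1 : (b : ℝ) - b' ≠ 0 := by
      rw [sub_ne_zero]; exact_mod_cast hne
    refine ⟨((a' : ℚ) - a) / (b - b'), ?_⟩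
    push_cast
    rw [div_eq_iff h1]; linarith
  subst hb
  refine ⟨?_, rfl⟩
  have : (a : ℝ) = a' := by linarith
  exact_mod_cast this

theorem gs_growth (Γ : ℝ) (hΓ : 0 ≤ Γ) (N : ℕ) : ∃ m : ℕ, 0 < m ∧ (Γ * (m : ℝ) ^ 4) ^ N < 2 ^ m := by
  have h := (tendsto_pow_const_div_const_pow_of_one_lt (4 * N) (one_lt_two : (1 : ℝ) < 2)).const_mul (Γ ^ N)
  rw [mul_zero] at h
  obtain ⟨m, hm, hm0⟩ := ((h.eventually (gt_mem_nhds zero_lt_one)).and (eventually_gt_atTop 0)).exists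
  refine ⟨m, hm0, ?_⟩
  rw [← mul_div_assoc, div_lt_one (by positivity)] at hm
  rwa [mul_pow, ← pow_mul]

noncomputable def gsEnt {K : Type} [Field K] (D : ℕ) (b : K) (p q : ℚ) (m : ℕ) (a c i j : ℕ) : K :=
  (D : K) ^ (9 * m ^ 3) * ((a : K) + c * b) ^ i * (p : K) ^ (j * a) * (q : K) ^ (j * c)

theorem gs_ent_int {K : Type} [Field K] [NumberField K] (D : ℕ) (b : K) (p q : ℚ) (m : ℕ)
    (hb : IsIntegral ℤ ((D : K) * b)) (hp : IsIntegral ℤ ((D : K) * p)) (hq : IsIntegral ℤ ((D : K) * q))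
    (a c i j : ℕ) (ha : a < 2 * m ^ 2) (hc : c < 2 * m ^ 2) (hi : i < m ^ 3) (hj : j < 2 * m) :
    IsIntegral ℤ (gsEnt D b p q m a c i j) := by
  have hn : ∀ n : ℕ, IsIntegral ℤ (n : K) := fun n => by
    simpa using (isIntegral_algebraMap (R := ℤ) (A := K) (x := (n : ℤ)))
  have e1 : j * a ≤ 4 * m ^ 3 := by
    calc j * a ≤ (2 * m) * (2 * m ^ 2) := Nat.mul_le_mul hj.le ha.le
      _ = _ := by ring
  have e2 : j * c ≤ 4 * m ^ 3 := by
    calc j * c ≤ (2 * m) * (2 * m ^ 2) := Nat.mul_le_mul hj.le hc.le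
      _ = _ := by ring
  have h1 : IsIntegral ℤ ((D : K) * ((a : K) + c * b)) := by
    rw [show (D : K) * ((a : K) + c * b) = D * a + c * (D * b) by ring]
    exact ((hn _).mul (hn _)).add ((hn _).mul hb)
  have := ((gs_int_pow K D _ h1 i (m ^ 3) hi.le).mul (gs_int_pow K D _ hp _ _ e1)).mul (gs_int_pow K D _ hq _ _ e2)
  have heq : gsEnt D b p q m a c i j = (D : K) ^ (m ^ 3) * ((a : K) + c * b) ^ i *
      ((D : K) ^ (4 * m ^ 3) * (p : K) ^ (j * a)) * ((D : K) ^ (4 * m ^ 3) * (q : K) ^ (j * c)) := by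
    unfold gsEnt
    rw [show 9 * m ^ 3 = m ^ 3 + 4 * m ^ 3 + 4 * m ^ 3 by ring, pow_add, pow_add]
    ring
  rw [heq]
  exact this

theorem gs_pow_le {x Y : ℝ} (hx : 0 ≤ x) (h : x ≤ Y) (hY : 1 ≤ Y) {i L : ℕ} (hi : i ≤ L) : x ^ i ≤ Y ^ L :=
  (pow_le_pow_left₀ hx h i).trans (pow_le_pow_right₀ hY hi)

theorem gs_ent_house {K : Type} [Field K] [NumberField K] (D : ℕ) (b : K) (p q : ℚ) (m : ℕ) (Y : ℝ)
    (hY : 1 ≤ Y) (hD : D ≤ Y) (hp : NumberField.house (p : K) ≤ Y) (hq : NumberField.house (q : K) ≤ Y)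
    (hb : 2 * (m : ℝ) ^ 2 * (1 + NumberField.house b) ≤ Y)
    (a c i j : ℕ) (ha : a < 2 * m ^ 2) (hc : c < 2 * m ^ 2) (hi : i < m ^ 3) (hj : j < 2 * m) :
    NumberField.house (gsEnt D b p q m a c i j) ≤ Y ^ (18 * m ^ 3) := by
  have hY0 : 0 ≤ Y := by linarith
  have e1 : j * a ≤ 4 * m ^ 3 := by
    calc j * a ≤ (2 * m) * (2 * m ^ 2) := Nat.mul_le_mul hj.le ha.le
      _ = _ := by ring
  have e2 : j * c ≤ 4 * m ^ 3 := by
    calc j * c ≤ (2 * m) * (2 * m ^ 2) := Nat.mul_le_mul hj.le hc.le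
      _ = _ := by ring
  have hnat : ∀ n : ℕ, NumberField.house (n : K) = n := fun n => by
    have := NumberField.house_intCast (K := K) (n : ℤ)
    simpa using this
  have h1 : NumberField.house ((a : K) + c * b) ≤ Y := by
    refine (NumberField.house_add_le _ _).trans (le_trans ?_ hb)
    rw [NumberField.house_nat_mul, hnat]
    have ha' : (a : ℝ) ≤ 2 * m ^ 2 := by exact_mod_cast ha.le
    have hc' : (c : ℝ) ≤ 2 * m ^ 2 := by exact_mod_cast hc.le
    have := NumberField.house_nonneg b
    nlinarith
  have hpw : ∀ (x : K) (i L : ℕ), NumberField.house x ≤ Y → i ≤ L → NumberField.house (x ^ i) ≤ Y ^ L :=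
    fun x i L hx hi => (NumberField.house_pow_le x i).trans (gs_pow_le (NumberField.house_nonneg _) hx hY hi)
  unfold gsEnt
  rw [show 18 * m ^ 3 = 9 * m ^ 3 + m ^ 3 + 4 * m ^ 3 + 4 * m ^ 3 by ring, pow_add, pow_add, pow_add]
  refine (NumberField.house_mul_le _ _).trans (mul_le_mul ?_ (hpw _ _ _ hq e2) (NumberField.house_nonneg _) (by positivity))
  refine (NumberField.house_mul_le _ _).trans (mul_le_mul ?_ (hpw _ _ _ hp e1) (NumberField.house_nonneg _) (by positivity))
  refine (NumberField.house_mul_le _ _).trans (mul_le_mul ?_ (hpw _ _ _ h1 hi.le) (NumberField.house_nonneg _) (by positivity))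
  exact hpw _ _ _ (by rw [hnat]; exact hD) le_rfl

theorem gs_contra (n m : ℕ) (Y t h : ℝ) (hn : 0 < n) (hY : 1 ≤ Y) (ht : t * 2 ^ (m ^ 4) ≤ Y ^ (31 * m ^ 3))
    (ht0 : 0 ≤ t) (h0 : 0 ≤ h) (hh : h ≤ Y ^ (38 * m ^ 3)) (h1 : 1 ≤ t * h ^ (n - 1)) (hm : 0 < m)
    (hYm : Y ^ (69 * n) < 2 ^ m) : False := by
  have a1 : h ^ (n - 1) ≤ Y ^ (38 * m ^ 3 * (n - 1)) := by
    rw [pow_mul]; exact pow_le_pow_left₀ h0 hh _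
  have a2 : (2 : ℝ) ^ (m ^ 4) ≤ Y ^ (69 * n * m ^ 3) := by
    calc (2 : ℝ) ^ (m ^ 4) ≤ 2 ^ (m ^ 4) * (t * h ^ (n - 1)) := le_mul_of_one_le_right (by positivity) h1
      _ = (t * 2 ^ (m ^ 4)) * h ^ (n - 1) := by ring
      _ ≤ Y ^ (31 * m ^ 3) * Y ^ (38 * m ^ 3 * (n - 1)) := by gcongr
      _ = Y ^ (31 * m ^ 3 + 38 * m ^ 3 * (n - 1)) := by rw [pow_add]
      _ ≤ _ := by
        apply pow_le_pow_right₀ hY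
        obtain ⟨k, rfl⟩ := Nat.exists_eq_succ_of_ne_zero hn.ne'
        simp only [Nat.succ_eq_add_one, Nat.add_sub_cancel]
        nlinarith [Nat.zero_le (k * m ^ 3), Nat.zero_le (m ^ 3)]
  have a3 : (Y ^ (69 * n)) ^ (m ^ 3) < ((2 : ℝ) ^ m) ^ (m ^ 3) :=
    pow_lt_pow_left₀ hYm (by positivity) (by positivity)
  rw [← pow_mul, ← pow_mul, show m * m ^ 3 = m ^ 4 by ring] at a3
  exact absurd a2 (not_le.2 a3)

noncomputable def gsF {K : Type} [Field K] (σ : K →+* ℝ) (l : ℝ) (m : ℕ) (ξ : Fin (m ^ 3) × Fin (2 * m) → K) (z : ℂ) : ℂ :=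
  ∑ k, (σ (ξ k) : ℂ) * z ^ (k.1 : ℕ) * Complex.exp ((k.2 : ℕ) * l * z)

theorem gs_F_val {K : Type} [Field K] (σ : K →+* ℝ) (m D : ℕ) (b : K) (p q : ℚ) (hp : 0 < p) (hq : 0 < q)
    (h : σ b * Real.log p = Real.log q)
    (ξ : Fin (m ^ 3) × Fin (2 * m) → K) (a c : ℕ) :
    ((σ (∑ k, gsEnt D b p q m a c k.1 k.2 * ξ k) : ℝ) : ℂ) =
      (D : ℂ) ^ (9 * m ^ 3) * gsF σ (Real.log p) m ξ (((a : ℝ) + c * σ b : ℝ) : ℂ) := by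
  unfold gsF gsEnt
  rw [map_sum, Complex.ofReal_sum, Finset.mul_sum]
  apply Finset.sum_congr rfl
  rintro ⟨i, j⟩ _
  have he : Complex.exp ((j : ℕ) * (Real.log p : ℝ) * (((a : ℝ) + c * σ b : ℝ) : ℂ)) =
      (p : ℂ) ^ ((j : ℕ) * a) * (q : ℂ) ^ ((j : ℕ) * c) := by
    have hp' : (0 : ℝ) < p := by exact_mod_cast hp
    have hq' : (0 : ℝ) < q := by exact_mod_cast hq
    have h1 : ((j : ℕ) : ℝ) * Real.log p * ((a : ℝ) + c * σ b) = ((((j : ℕ) * a : ℕ)) : ℝ) * Real.log p + (((j : ℕ) * c : ℕ) : ℝ) * Real.log q := by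
      rw [← h]; push_cast; ring
    have h2 : Real.exp (((j : ℕ) : ℝ) * Real.log p * ((a : ℝ) + c * σ b)) = (p : ℝ) ^ ((j : ℕ) * a) * (q : ℝ) ^ ((j : ℕ) * c) := by
      rw [h1, Real.exp_add, Real.exp_nat_mul, Real.exp_nat_mul, Real.exp_log hp', Real.exp_log hq']
    have h3 := congrArg (fun x : ℝ => (x : ℂ)) h2
    simp only [Complex.ofReal_exp] at h3
    push_cast at h3 ⊢
    exact h3
  simp only [he, map_mul, map_pow, map_add, map_natCast, map_ratCast]
  push_cast
  ring

theorem gs_F_diff {K : Type} [Field K] (σ : K →+* ℝ) (l : ℝ) (m : ℕ) (ξ : Fin (m ^ 3) × Fin (2 * m) → K) :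
    Differentiable ℂ (gsF σ l m ξ) := by
  unfold gsF
  fun_prop

theorem gs_F_bound {K : Type} [Field K] (σ : K →+* ℝ) (l : ℝ) (m : ℕ) (ξ : Fin (m ^ 3) × Fin (2 * m) → K)
    (Y : ℝ) (hY : 1 ≤ Y) (R g : ℝ) (hR : R = g * m ^ 2) (hRY : R ≤ Y) (hl : Real.exp (2 * |l| * g) ≤ Y)
    (hξ : ∀ k, |σ (ξ k)| ≤ Y ^ (19 * m ^ 3)) (hN : 2 * (m : ℝ) ^ 4 ≤ Y) (hm : 0 < m) (z : ℂ) (hz : ‖z‖ = R) :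
    ‖gsF σ l m ξ z‖ ≤ Y ^ (22 * m ^ 3) := by
  have hm3 : 1 ≤ m ^ 3 := Nat.one_le_pow _ _ hm
  have hterm : ∀ k : Fin (m ^ 3) × Fin (2 * m),
      ‖(σ (ξ k) : ℂ) * z ^ (k.1 : ℕ) * Complex.exp ((k.2 : ℕ) * l * z)‖ ≤ Y ^ (21 * m ^ 3) := by
    rintro ⟨i, j⟩
    rw [show 21 * m ^ 3 = 19 * m ^ 3 + m ^ 3 + m ^ 3 by ring, pow_add, pow_add, norm_mul, norm_mul, norm_pow, Complex.norm_real, hz]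
    have hR0 : 0 ≤ R := hz ▸ norm_nonneg z
    have h1 : R ^ (i : ℕ) ≤ Y ^ (m ^ 3) := gs_pow_le hR0 hRY hY i.2.le
    have h2 : ‖Complex.exp ((j : ℕ) * l * z)‖ ≤ Y ^ (m ^ 3) := by
      refine (Complex.norm_exp_le_exp_norm _).trans ?_
      rw [norm_mul, norm_mul, Complex.norm_natCast, Complex.norm_real, Real.norm_eq_abs, hz]
      calc _ ≤ Real.exp (((m ^ 3 : ℕ) : ℝ) * (2 * |l| * g)) := by
            apply Real.exp_le_exp.2
            have hj : ((j : ℕ) : ℝ) ≤ 2 * m := by exact_mod_cast j.2.le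
            calc ((j : ℕ) : ℝ) * |l| * R ≤ (2 * m) * |l| * R := by gcongr
              _ = _ := by rw [hR]; push_cast; ring
        _ = (Real.exp (2 * |l| * g)) ^ (m ^ 3) := by rw [Real.exp_nat_mul]
        _ ≤ _ := by gcongr
    have h3 := hξ (i, j)
    rw [Real.norm_eq_abs]
    have : 0 ≤ Y := by linarith
    gcongr
  unfold gsF
  refine (norm_sum_le_of_le _ (fun k _ => hterm k)).trans ?_
  rw [Finset.sum_const, nsmul_eq_mul]
  simp only [Finset.card_univ, Fintype.card_prod, Fintype.card_fin]
  calc _ = (2 * (m : ℝ) ^ 4) * Y ^ (21 * m ^ 3) := by push_cast; ring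
    _ ≤ Y * Y ^ (21 * m ^ 3) := by gcongr
    _ = Y ^ (21 * m ^ 3 + 1) := by rw [pow_succ]; ring
    _ ≤ _ := pow_le_pow_right₀ hY (by omega)

theorem gs_zeros {K : Type} [Field K] (σ : K →+* ℝ) (l : ℝ) (hl : l ≠ 0) (m : ℕ) (b : K) (hirr : Irrational (σ b))
    (ξ : Fin (m ^ 3) × Fin (2 * m) → K)
    (h : ∀ a < 2 * m ^ 2, ∀ c < 2 * m ^ 2, gsF σ l m ξ (((a : ℝ) + c * σ b : ℝ) : ℂ) = 0) : ξ = 0 := by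
  classical
  let P : ℕ → Polynomial ℝ := fun j => if hj : j < 2 * m then
    ∑ i : Fin (m ^ 3), Polynomial.C (σ (ξ (i, ⟨j, hj⟩))) * Polynomial.X ^ (i : ℕ) else 0
  have hval : ∀ x : ℝ, gsF σ l m ξ (x : ℂ) = ((∑ j ∈ Finset.range (2 * m), (P j).eval x * Real.exp (j * l * x) : ℝ) : ℂ) := by
    intro x
    unfold gsF
    rw [Finset.sum_range, Fintype.sum_prod_type_right]
    push_cast
    apply Finset.sum_congr rfl
    intro j _
    have : P (j : ℕ) = ∑ i : Fin (m ^ 3), Polynomial.C (σ (ξ (i, j))) * Polynomial.X ^ (i : ℕ) := by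
      simp [P]
    rw [this, Polynomial.eval_finsetSum, Complex.ofReal_sum, Finset.sum_mul]
    apply Finset.sum_congr rfl
    intro i _
    simp
  have hdeg : ∀ j < 2 * m, (P j).degree < ((m ^ 3 : ℕ) : WithBot ℕ) := by
    intro j hj
    simp only [P, hj, dif_pos]
    refine (Polynomial.degree_sum_le _ _).trans_lt ?_
    rw [Finset.sup_lt_iff (WithBot.bot_lt_coe _)]
    intro i _
    refine (Polynomial.degree_C_mul_X_pow_le _ _).trans_lt ?_
    exact_mod_cast i.2
  let pt : ℕ × ℕ → ℝ := fun k => (k.1 : ℝ) + k.2 * σ b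
  have hinj : Function.Injective pt := by
    rintro ⟨a, c⟩ ⟨a', c'⟩ h
    obtain ⟨h1, h2⟩ := gs_inj _ hirr _ _ _ _ h
    exact Prod.ext h1 h2
  let Z : Finset ℝ := (Finset.range (2 * m ^ 2) ×ˢ Finset.range (2 * m ^ 2)).image pt
  have hZc : Z.card = 4 * m ^ 4 := by
    rw [Finset.card_image_of_injective _ hinj, Finset.card_product, Finset.card_range]; ring
  have hsub : m ^ 3 * (2 * m) ≤ Z.card := by rw [hZc]; nlinarith [Nat.zero_le (m ^ 4)]
  obtain ⟨Z', hZ', hZ'c⟩ := Finset.exists_subset_card_eq hsub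
  have hz := gs_zero_est l hl (m ^ 3) (2 * m) P hdeg
    ⟨Z'.orderEmbOfFin hZ'c, (Z'.orderEmbOfFin hZ'c).strictMono, by
      intro i
      have h1 := hZ' (Finset.orderEmbOfFin_mem Z' hZ'c i)
      obtain ⟨⟨a, c⟩, hac, h2⟩ := Finset.mem_image.1 h1
      rw [Finset.mem_product, Finset.mem_range, Finset.mem_range] at hac
      have h3 := h a hac.1 c hac.2
      rw [hval] at h3
      rw [← h2]
      exact_mod_cast h3⟩
  ext ⟨i, j⟩
  have h1 := hz j j.2
  have h2 := congrArg (fun Q : Polynomial ℝ => Q.coeff (i : ℕ)) h1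
  have : P (j : ℕ) = ∑ i : Fin (m ^ 3), Polynomial.C (σ (ξ (i, j))) * Polynomial.X ^ (i : ℕ) := by
    simp [P]
  simp only [this, Polynomial.finsetSum_coeff, Polynomial.coeff_C_mul_X_pow, Polynomial.coeff_zero] at h2
  rw [Finset.sum_eq_single i] at h2
  · simpa using h2
  · intro i' _ hi'
    rw [if_neg]
    intro h; exact hi' (Fin.ext h.symm)
  · simp

set_option maxHeartbeats 2000000 in
theorem gs_core (K : Type) [Field K] [NumberField K] (σ : K →+* ℝ) (b : K) (hirr : Irrational (σ b)) (p q : ℚ)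
    (hp : 0 < p) (hq : 0 < q) (h : σ b * Real.log p = Real.log q) : p = 1 := by
  classical
  by_contra hp1
  have hp' : (0 : ℝ) < p := by exact_mod_cast hp
  have hl : Real.log p ≠ 0 := by
    apply Real.log_ne_zero_of_pos_of_ne_one hp'
    exact_mod_cast hp1
  set l := Real.log p with hldef
  obtain ⟨D, hD0, hDb, hDp, hDq⟩ := gs_denom K b p q
  obtain ⟨C, hC1, hC⟩ := gs_siegel K
  set n := Module.finrank ℚ K with hn
  have hnpos : 0 < n := Module.finrank_pos
  set g : ℝ := 10 * (1 + |σ b|) with hg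
  set σ' : K →+* ℂ := Complex.ofRealHom.comp σ with hσ'
  have hb0 := NumberField.house_nonneg b
  have hp0 := NumberField.house_nonneg (p : K)
  have hq0 := NumberField.house_nonneg (q : K)
  have hg0 : 0 < g := by positivity
  have he0 := Real.exp_pos (2 * |l| * g)
  set Γ : ℝ := 1 + D + NumberField.house (p : K) + NumberField.house (q : K) + 2 * (1 + NumberField.house b)
    + g + Real.exp (2 * |l| * g) + 2 * C * C with hΓ
  have hCC : 1 ≤ C * C := by nlinarith
  have hDr : (0 : ℝ) ≤ D := by positivity
  obtain ⟨m, hm, hmY⟩ := gs_growth Γ (by positivity) (69 * n)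
  set Y : ℝ := Γ * (m : ℝ) ^ 4 with hY
  have hm1 : (1 : ℝ) ≤ m := by exact_mod_cast hm
  have hm4 : (1 : ℝ) ≤ (m : ℝ) ^ 4 := one_le_pow₀ hm1
  have hm24 : (m : ℝ) ^ 2 ≤ (m : ℝ) ^ 4 := pow_le_pow_right₀ hm1 (by norm_num)
  have hΓ1 : 1 ≤ Γ := by rw [hΓ]; nlinarith
  have hΓY : Γ ≤ Y := by rw [hY]; nlinarith
  have hY1 : 1 ≤ Y := hΓ1.trans hΓY
  have big : ∀ x : ℝ, 0 ≤ x → x ≤ Γ → x * (m : ℝ) ^ 4 ≤ Y := fun x _ hx => by rw [hY]; gcongr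
  have big2 : ∀ x : ℝ, 0 ≤ x → x ≤ Γ → x * (m : ℝ) ^ 2 ≤ Y := fun x h0 hx =>
    (mul_le_mul_of_nonneg_left hm24 h0).trans (big x h0 hx)
  have yD : (D : ℝ) ≤ Y := le_trans (by rw [hΓ]; nlinarith) hΓY
  have yp : NumberField.house (p : K) ≤ Y := le_trans (by rw [hΓ]; nlinarith) hΓY
  have yq : NumberField.house (q : K) ≤ Y := le_trans (by rw [hΓ]; nlinarith) hΓY
  have ye : Real.exp (2 * |l| * g) ≤ Y := le_trans (by rw [hΓ]; nlinarith) hΓY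
  have yb : 2 * (m : ℝ) ^ 2 * (1 + NumberField.house b) ≤ Y := by
    have := big2 (2 * (1 + NumberField.house b)) (by positivity) (by rw [hΓ]; nlinarith)
    linarith
  have yg : g * (m : ℝ) ^ 2 ≤ Y := big2 g hg0.le (by rw [hΓ]; nlinarith)
  have yC : 2 * C * C * (m : ℝ) ^ 4 ≤ Y := big _ (by nlinarith) (by rw [hΓ]; nlinarith)
  have yN : 2 * (m : ℝ) ^ 4 ≤ Y := by nlinarith
  have hm3 : 1 ≤ m ^ 3 := Nat.one_le_pow _ _ hm
  have hm2 : 1 ≤ m ^ 2 := Nat.one_le_pow _ _ hm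
  -- Siegel
  let M : Matrix (Fin (m ^ 2) × Fin (m ^ 2)) (Fin (m ^ 3) × Fin (2 * m)) (NumberField.RingOfIntegers K) :=
    fun k w => ⟨gsEnt D b p q m k.1 k.2 w.1 w.2,
      gs_ent_int D b p q m hDb hDp hDq _ _ _ _ (by have := k.1.2; omega) (by have := k.2.2; omega) w.1.2 w.2.2⟩
  have hM0 : M ≠ 0 := by
    intro h0
    have h1 := congrFun (congrFun h0 (⟨0, by omega⟩, ⟨0, by omega⟩)) (⟨0, by omega⟩, ⟨0, by omega⟩)
    have h2 := congrArg (fun x : NumberField.RingOfIntegers K => (x : K)) h1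
    simp [M, gsEnt] at h2
    omega
  obtain ⟨ξ, hξ0, hξM, hξh⟩ := hC _ _ M (Y ^ (18 * m ^ 3)) hM0
    (by simp only [Fintype.card_prod, Fintype.card_fin]; positivity)
    (by simp only [Fintype.card_prod, Fintype.card_fin]; ring)
    (fun k w => gs_ent_house D b p q m Y hY1 yD yp yq yb _ _ _ _ (by have := k.1.2; omega)
      (by have := k.2.2; omega) w.1.2 w.2.2)
  have hξb : ∀ w, NumberField.house (ξ w : K) ≤ Y ^ (19 * m ^ 3) := by
    intro w
    refine (hξh w).trans ?_
    simp only [Fintype.card_prod, Fintype.card_fin]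
    calc _ = (2 * C * C * (m : ℝ) ^ 4) * Y ^ (18 * m ^ 3) := by push_cast; ring
      _ ≤ Y * Y ^ (18 * m ^ 3) := by gcongr
      _ = Y ^ (18 * m ^ 3 + 1) := by rw [pow_succ]; ring
      _ ≤ _ := pow_le_pow_right₀ hY1 (by omega)
  let ξ' : Fin (m ^ 3) × Fin (2 * m) → K := fun w => (ξ w : K)
  have hξσ : ∀ w, |σ (ξ' w)| ≤ Y ^ (19 * m ^ 3) := by
    intro w
    refine le_trans ?_ (hξb w)
    have := NumberField.norm_embedding_le_house (ξ w : K) σ'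
    rw [hσ', RingHom.comp_apply, Complex.ofRealHom_eq_coe, Complex.norm_real, Real.norm_eq_abs] at this
    exact this
  have hDc : (D : ℂ) ^ (9 * m ^ 3) ≠ 0 := by
    apply pow_ne_zero; exact_mod_cast hD0.ne'
  have hvan : ∀ a < m ^ 2, ∀ c < m ^ 2, gsF σ l m ξ' (((a : ℝ) + c * σ b : ℝ) : ℂ) = 0 := by
    intro a ha c hc
    have h1 := congrFun hξM (⟨a, ha⟩, ⟨c, hc⟩)
    have h2 := congrArg (fun x : NumberField.RingOfIntegers K => (x : K)) h1
    simp only [Matrix.mulVec, dotProduct, map_sum, map_mul, Pi.zero_apply, map_zero] at h2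
    have h3 := gs_F_val σ m D b p q hp hq h ξ' a c
    have h4 : ∑ k, gsEnt D b p q m a c k.1 k.2 * ξ' k = 0 := h2
    rw [h4, map_zero, Complex.ofReal_zero] at h3
    exact (mul_eq_zero.1 h3.symm).resolve_left hDc
  -- extrapolation
  have hinj : Function.Injective (fun k : ℕ × ℕ => (((k.1 : ℝ) + k.2 * σ b : ℝ) : ℂ)) := by
    rintro ⟨a, c⟩ ⟨a', c'⟩ h
    obtain ⟨h1, h2⟩ := gs_inj _ hirr _ _ _ _ (Complex.ofReal_injective h)
    exact Prod.ext h1 h2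
  let Z : Finset ℂ := (Finset.range (m ^ 2) ×ˢ Finset.range (m ^ 2)).image
    (fun k : ℕ × ℕ => (((k.1 : ℝ) + k.2 * σ b : ℝ) : ℂ))
  have hZc : Z.card = m ^ 4 := by
    rw [Finset.card_image_of_injective _ hinj, Finset.card_product, Finset.card_range]; ring
  have hpt : ∀ a ≤ 2 * m ^ 2, ∀ c ≤ 2 * m ^ 2, ‖(((a : ℝ) + c * σ b : ℝ) : ℂ)‖ ≤ 2 * m ^ 2 * (1 + |σ b|) := by
    intro a ha c hc
    rw [Complex.norm_real, Real.norm_eq_abs]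
    have ha' : (a : ℝ) ≤ 2 * m ^ 2 := by exact_mod_cast ha
    have hc' : (c : ℝ) ≤ 2 * m ^ 2 := by exact_mod_cast hc
    have h1 := abs_add_le (a : ℝ) (c * σ b)
    rw [abs_mul, Nat.abs_cast, Nat.abs_cast] at h1
    have := abs_nonneg (σ b)
    nlinarith
  have hall : ∀ a < 2 * m ^ 2, ∀ c < 2 * m ^ 2, gsF σ l m ξ' (((a : ℝ) + c * σ b : ℝ) : ℂ) = 0 := by
    intro a ha c hc
    by_contra hne
    set η : K := ∑ k, gsEnt D b p q m a c k.1 k.2 * ξ' k with hη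
    have hval := gs_F_val σ m D b p q hp hq h ξ' a c
    have hη0 : η ≠ 0 := by
      intro h0
      rw [← hη, h0, map_zero, Complex.ofReal_zero] at hval
      exact hne ((mul_eq_zero.1 hval.symm).resolve_left hDc)
    have hηi : IsIntegral ℤ η := by
      apply IsIntegral.sum
      intro k _
      exact (gs_ent_int D b p q m hDb hDp hDq _ _ _ _ ha hc k.1.2 k.2.2).mul (ξ k).2
    have hηh : NumberField.house η ≤ Y ^ (38 * m ^ 3) := by
      refine (NumberField.house_sum_le_sum_house _ _).trans ?_
      calc _ ≤ ∑ k : Fin (m ^ 3) × Fin (2 * m), Y ^ (18 * m ^ 3) * Y ^ (19 * m ^ 3) := by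
            apply Finset.sum_le_sum
            intro k _
            refine (NumberField.house_mul_le _ _).trans (mul_le_mul ?_ (hξb k) (NumberField.house_nonneg _) (by positivity))
            exact gs_ent_house D b p q m Y hY1 yD yp yq yb _ _ _ _ ha hc k.1.2 k.2.2
        _ = (2 * (m : ℝ) ^ 4) * Y ^ (37 * m ^ 3) := by
          rw [Finset.sum_const, nsmul_eq_mul, ← pow_add]
          simp only [Finset.card_univ, Fintype.card_prod, Fintype.card_fin]
          rw [show 18 * m ^ 3 + 19 * m ^ 3 = 37 * m ^ 3 by ring]
          push_cast; ring
        _ ≤ Y * Y ^ (37 * m ^ 3) := by gcongr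
        _ = Y ^ (37 * m ^ 3 + 1) := by rw [pow_succ]; ring
        _ ≤ _ := pow_le_pow_right₀ hY1 (by omega)
    have hlio := gs_liouville K σ' η hηi hη0
    have hsmall := gs_maxmod (gsF σ l m ξ') (gs_F_diff _ _ _ _) Z
      (by
        intro z hz
        obtain ⟨⟨a, c⟩, hac, rfl⟩ := Finset.mem_image.1 hz
        rw [Finset.mem_product, Finset.mem_range, Finset.mem_range] at hac
        exact hvan a hac.1 c hac.2)
      (2 * m ^ 2 * (1 + |σ b|)) (Y ^ (22 * m ^ 3)) (by positivity)
      (by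
        intro z hz
        obtain ⟨⟨a, c⟩, hac, rfl⟩ := Finset.mem_image.1 hz
        rw [Finset.mem_product, Finset.mem_range, Finset.mem_range] at hac
        exact hpt a (by omega) c (by omega))
      (fun z hz => gs_F_bound σ l m ξ' Y hY1 (g * m ^ 2) g rfl yg ye hξσ yN hm z (by rw [hz, hg]; ring))
      _ (hpt a ha.le c hc.le)
    rw [hZc] at hsmall
    have hσ'η : ‖σ' η‖ = (D : ℝ) ^ (9 * m ^ 3) * ‖gsF σ l m ξ' (((a : ℝ) + c * σ b : ℝ) : ℂ)‖ := by
      rw [hσ', RingHom.comp_apply, Complex.ofRealHom_eq_coe, hval, norm_mul, norm_pow, Complex.norm_natCast]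
    refine gs_contra n m Y ‖σ' η‖ (NumberField.house η) hnpos hY1 ?_ (norm_nonneg _) (NumberField.house_nonneg _)
      hηh hlio hm hmY
    rw [hσ'η, mul_assoc, show 31 * m ^ 3 = 9 * m ^ 3 + 22 * m ^ 3 by ring, pow_add]
    gcongr
  have hz := gs_zeros σ l hl m b hirr ξ' hall
  apply hξ0
  ext w
  exact congrFun hz w

theorem gs_real (β : ℝ) (hirr : Irrational β) (halg : IsAlgebraic ℚ β) (p q : ℚ) (hp : 0 < p) (hq : 0 < q)
    (h : β * Real.log p = Real.log q) : p = 1 := by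
  have hi : IsIntegral ℚ β := halg.isIntegral
  have : FiniteDimensional ℚ (IntermediateField.adjoin ℚ {β}) := IntermediateField.adjoin.finiteDimensional hi
  have : NumberField (IntermediateField.adjoin ℚ {β}) := ⟨⟩
  have hb : (IntermediateField.adjoin ℚ {β}).val.toRingHom (IntermediateField.AdjoinSimple.gen ℚ β) = β :=
    IntermediateField.AdjoinSimple.coe_gen ℚ β
  exact gs_core (IntermediateField.adjoin ℚ {β}) (IntermediateField.adjoin ℚ {β}).val.toRingHom
    (IntermediateField.AdjoinSimple.gen ℚ β) (by rw [hb]; exact hirr) p q hp hq (by rw [hb]; exact h)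

theorem self_approx_zeta_algebraic_irrational (d : ℝ) (hd_irr : Irrational d)
    (hd_alg : IsAlgebraic ℚ d)
    (K : Set ℂ) (hK : IsCompact K) (hKD : K ⊆ strip) (hKc : IsConnected Kᶜ)
    (ε : ℝ) (hε : 0 < ε) :
    0 < lowerDens {τ : ℝ |
      supNorm K (fun s => riemannZeta (s + (d * τ : ℝ) * Complex.I)
        - riemannZeta (s + τ * Complex.I)) < ENNReal.ofReal ε} := by
  have h1 : Irrational (d - 1) := by
    have := hd_irr.sub_natCast 1
    simpa using this
  have h2 : IsAlgebraic ℚ (d - 1) := hd_alg.sub isAlgebraic_one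
  exact main_of_gs d hd_irr.ne_zero hd_irr.ne_one
    (fun p q hp hq h => gs_real (d - 1) h1 h2 p q hp hq h) K hK hKD ε hε
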